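/- arXiv:1702.00972 — 5 statements merged into one kernel-verified Lean document; each statement's English description precedes it below -/
import Mathlib

section
/- Let s₁ < s₀ be real numbers, let θ ∈ (0,1), and let 0 < q < ∞. Then there exists a constant c > 0 such that for every complex sequence (a_j)_{j∈ℕ} with sup_{j∈ℕ} 2^{s₀ j} |a_j| < ∞, one has (∑_{j=0}^∞ 2^{(θ s₀ + (1−θ) s₁) j q} |a_j|^q)^{1/q} ≤ c · (sup_{j∈ℕ} 2^{s₀ j} |a_j|)^θ · (sup_{j∈ℕ} 2^{s₁ j} |a_j|)^{1−θ}. -/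
open scoped ENNReal NNReal

/-!
With base `b`, put `w = b ^ ((s₀ - s₁) * q)`, let `v j` be the `q`-th power of the `j`-th term
weighted with `s₁`, and let `A`, `B` be the `q`-th powers of the two suprema. Then `v j ≤ B` and
`w ^ j * v j ≤ A`, and the sum of `w ^ (θ * j) * v j` has to be bounded. Choose the integer `n` with
`w ^ n < A / B ≤ w ^ (n + 1)`. The bound by `B` makes the terms decay geometrically as `j` goes
down from `n`, and the bound by `A` makes them decay geometrically as `j` goes up from `n + 1`.
Relative to `A ^ θ * B ^ (1 - θ)` both rates depend only on `w` and `θ`, so the sum is controlled by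
one convergent series over `ℤ`.
-/

/-- The two-sided geometric profile with decay rate `w ^ (-θ)` towards `-∞` and `w ^ (-(1 - θ))`
towards `+∞`. Its translates dominate the terms of the interpolated sum; the branches are offset
so that the first one starts with value `1` at `m = -1` and the second one at `m = 0`. -/
noncomputable def interpolationKernel (w : ℝ≥0∞) (θ : ℝ) (m : ℤ) : ℝ≥0∞ :=
  min (w ^ (θ * (m + 1))) (w ^ (-((1 - θ) * m)))

theorem tsum_rpow_neg_mul_natCast_lt_top {w : ℝ≥0∞} (hw : 1 < w) {α : ℝ} (hα : 0 < α) :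
    ∑' k : ℕ, w ^ (-(α * k)) < ∞ := by
  simp only [← neg_mul, ENNReal.rpow_mul, ENNReal.rpow_natCast]
  exact tsum_geometric_lt_top.2
    (ENNReal.rpow_lt_one_of_one_lt_of_neg hw (neg_neg_of_pos hα))

theorem tsum_interpolationKernel_lt_top {w : ℝ≥0∞} (hw : 1 < w) {θ : ℝ}
    (hθ : θ ∈ Set.Ioo (0 : ℝ) 1) : ∑' m : ℤ, interpolationKernel w θ m < ∞ := by
  rw [tsum_of_nat_of_neg_add_one ENNReal.summable ENNReal.summable]
  refine ENNReal.add_lt_top.2 ⟨?_, ?_⟩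
  · refine (ENNReal.tsum_le_tsum fun k ↦ ?_).trans_lt
      (tsum_rpow_neg_mul_natCast_lt_top hw (sub_pos.2 hθ.2))
    exact min_le_right _ _
  · refine (ENNReal.tsum_le_tsum fun k ↦ ?_).trans_lt (tsum_rpow_neg_mul_natCast_lt_top hw hθ.1)
    refine (min_le_left _ _).trans_eq ?_
    push_cast
    ring_nf

theorem one_le_tsum_interpolationKernel {w : ℝ≥0∞} (hw : 1 ≤ w) {θ : ℝ} (hθ : 0 ≤ θ) :
    1 ≤ ∑' m : ℤ, interpolationKernel w θ m :=
  calc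
    1 ≤ interpolationKernel w θ 0 := by
      simpa [interpolationKernel] using ENNReal.rpow_le_rpow_of_exponent_le hw hθ
    _ ≤ ∑' m : ℤ, interpolationKernel w θ m := ENNReal.le_tsum 0

theorem le_rpow_mul_rpow_mul_rpow_of_le_mul {x y u : ℝ≥0∞} {θ : ℝ} (hθ : θ ∈ Set.Icc (0 : ℝ) 1)
    (h : x ≤ u * y) : x ≤ u ^ θ * (y ^ θ * x ^ (1 - θ)) :=
  calc
    x = x ^ θ * x ^ (1 - θ) := by
      rw [← ENNReal.rpow_add_of_nonneg _ _ hθ.1 (sub_nonneg.2 hθ.2), add_sub_cancel,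
        ENNReal.rpow_one]
    _ ≤ (u * y) ^ θ * x ^ (1 - θ) := by gcongr; exact hθ.1
    _ = u ^ θ * (y ^ θ * x ^ (1 - θ)) := by
      rw [ENNReal.mul_rpow_of_nonneg _ _ hθ.1, mul_assoc]

section

variable {w : ℝ≥0∞} {θ : ℝ} {A B : ℝ≥0∞}

theorem rpow_mul_mul_le_interpolationKernel_mul (hw₀ : w ≠ 0) (hw : w ≠ ∞)
    (hθ : θ ∈ Set.Icc (0 : ℝ) 1) {n j : ℤ} {y : ℝ≥0∞} (hBA : B ≤ w ^ (-n : ℝ) * A)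
    (hAB : A ≤ w ^ (n + 1 : ℝ) * B) (hA : w ^ (j : ℝ) * y ≤ A) (hB : y ≤ B) :
    w ^ (θ * j) * y ≤ interpolationKernel w θ (j - (n + 1)) * (A ^ θ * B ^ (1 - θ)) := by
  have hθ' : 1 - θ ∈ Set.Icc (0 : ℝ) 1 := ⟨sub_nonneg.2 hθ.2, sub_le_self 1 hθ.1⟩
  have lower_branch : w ^ (θ * j) * y ≤ w ^ (θ * (j - n)) * (A ^ θ * B ^ (1 - θ)) :=
    calc
      w ^ (θ * j) * y
        ≤ w ^ (θ * j) * ((w ^ (-n : ℝ)) ^ θ * (A ^ θ * B ^ (1 - θ))) := by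
          gcongr
          exact hB.trans (le_rpow_mul_rpow_mul_rpow_of_le_mul hθ hBA)
      _ = w ^ (θ * (j - n)) * (A ^ θ * B ^ (1 - θ)) := by
          rw [← mul_assoc, ← ENNReal.rpow_mul, ← ENNReal.rpow_add _ _ hw₀ hw]
          ring_nf
  have upper_branch :
      w ^ (θ * j) * y ≤ w ^ (-((1 - θ) * (j - (n + 1)))) * (A ^ θ * B ^ (1 - θ)) :=
    calc
      w ^ (θ * j) * y = w ^ (-((1 - θ) * j)) * (w ^ (j : ℝ) * y) := by
          rw [← mul_assoc, ← ENNReal.rpow_add _ _ hw₀ hw]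
          ring_nf
      _ ≤ w ^ (-((1 - θ) * j)) * ((w ^ (n + 1 : ℝ)) ^ (1 - θ) * (A ^ θ * B ^ (1 - θ))) := by
          refine mul_le_mul_right (hA.trans ?_) _
          refine (le_rpow_mul_rpow_mul_rpow_of_le_mul hθ' hAB).trans_eq ?_
          rw [sub_sub_cancel, mul_comm (B ^ _)]
      _ = w ^ (-((1 - θ) * (j - (n + 1)))) * (A ^ θ * B ^ (1 - θ)) := by
          rw [← mul_assoc, ← ENNReal.rpow_mul, ← ENNReal.rpow_add _ _ hw₀ hw]
          ring_nf
  rw [interpolationKernel, min_mul]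
  push_cast
  refine le_min (lower_branch.trans_eq ?_) upper_branch
  ring_nf

theorem exists_int_le_rpow_mul_and_le_rpow_mul (hw₁ : 1 < w) (hw : w ≠ ∞) (hA₀ : A ≠ 0)
    (hA : A ≠ ∞) (hB₀ : B ≠ 0) (hB : B ≠ ∞) :
    ∃ n : ℤ, B ≤ w ^ (-n : ℝ) * A ∧ A ≤ w ^ (n + 1 : ℝ) * B := by
  obtain ⟨n, hn, hn'⟩ := ENNReal.exists_mem_Ioc_zpow (ENNReal.div_ne_zero.2 ⟨hA₀, hB⟩)
    (ENNReal.div_ne_top hA hB₀) hw₁ hw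
  have hw₀ : w ≠ 0 := (zero_lt_one.trans hw₁).ne'
  refine ⟨n, ?_, ?_⟩
  · rw [ENNReal.rpow_neg, ENNReal.rpow_intCast, ← ENNReal.mul_le_iff_le_inv
      (ENNReal.zpow_pos hw₀ hw n).ne' (ENNReal.zpow_lt_top hw₀ hw n).ne]
    exact ENNReal.mul_le_of_le_div hn.le
  · rw [← ENNReal.rpow_intCast] at hn'
    push_cast at hn'
    exact (ENNReal.div_le_iff hB₀ hB).1 hn'

variable {ι : Type*} {e : ι → ℤ} {v : ι → ℝ≥0∞}

theorem tsum_rpow_mul_le (hw₁ : 1 < w) (hw : w ≠ ∞) (hθ : θ ∈ Set.Ioo (0 : ℝ) 1)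
    (he : Function.Injective e) (hA : ∀ i, w ^ (e i : ℝ) * v i ≤ A) (hB : ∀ i, v i ≤ B) :
    ∑' i, w ^ (θ * e i) * v i
      ≤ (∑' m : ℤ, interpolationKernel w θ m) * (A ^ θ * B ^ (1 - θ)) := by
  have hw₀ : w ≠ 0 := (zero_lt_one.trans hw₁).ne'
  have hθ' : 0 < 1 - θ := sub_pos.2 hθ.2
  by_cases! hv : ∀ i, v i = 0
  · simp [hv]
  obtain ⟨i₀, hi₀⟩ := hv
  have hB₀ : B ≠ 0 := (hi₀.bot_lt.trans_le (hB i₀)).ne'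
  have hA₀ : A ≠ 0 := by
    have hpos : 0 < w ^ (e i₀ : ℝ) * v i₀ :=
      ENNReal.mul_pos (ENNReal.rpow_pos hw₀.bot_lt hw).ne' hi₀
    exact (hpos.trans_le (hA i₀)).ne'
  have hK : ∑' m : ℤ, interpolationKernel w θ m ≠ 0 :=
    (zero_lt_one.trans_le (one_le_tsum_interpolationKernel hw₁.le hθ.1.le)).ne'
  rcases eq_or_ne A ∞ with rfl | hA'
  · have hBθ : B ^ (1 - θ) ≠ 0 := by simp [hB₀, hθ.2.le]
    simp [ENNReal.top_rpow_of_pos hθ.1, ENNReal.top_mul hBθ, ENNReal.mul_top hK]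
  rcases eq_or_ne B ∞ with rfl | hB'
  · have hAθ : A ^ θ ≠ 0 := by simp [hA₀, hθ.1.le]
    simp [ENNReal.top_rpow_of_pos hθ', ENNReal.mul_top hAθ, ENNReal.mul_top hK]
  obtain ⟨n, hBA, hAB⟩ := exists_int_le_rpow_mul_and_le_rpow_mul hw₁ hw hA₀ hA' hB₀ hB'
  calc
    ∑' i, w ^ (θ * e i) * v i
      ≤ ∑' i, interpolationKernel w θ (e i - (n + 1)) * (A ^ θ * B ^ (1 - θ)) :=
        ENNReal.tsum_le_tsum fun i ↦ rpow_mul_mul_le_interpolationKernel_mul hw₀ hw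
          (Set.Ioo_subset_Icc_self hθ) hBA hAB (hA i) (hB i)
    _ = (∑' i, interpolationKernel w θ (e i - (n + 1))) * (A ^ θ * B ^ (1 - θ)) :=
        ENNReal.tsum_mul_right
    _ ≤ (∑' m : ℤ, interpolationKernel w θ m) * (A ^ θ * B ^ (1 - θ)) := by
        gcongr
        exact ENNReal.tsum_comp_le_tsum_of_injective
          ((sub_left_injective (b := n + 1)).comp he) _

end

section

variable {b : ℝ≥0∞} {q : ℝ}

theorem rpow_mul_mul_rpow_eq_mul_rpow (hb₀ : b ≠ 0) (hb : b ≠ ∞) (hq : 0 ≤ q)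
    (δ s η j : ℝ) (x : ℝ≥0∞) :
    (b ^ (δ * q)) ^ (η * j) * (b ^ (s * j) * x) ^ q = (b ^ ((s + η * δ) * j) * x) ^ q := by
  rw [ENNReal.mul_rpow_of_nonneg _ _ hq, ENNReal.mul_rpow_of_nonneg _ _ hq, ← mul_assoc,
    ← ENNReal.rpow_mul, ← ENNReal.rpow_mul, ← ENNReal.rpow_mul, ← ENNReal.rpow_add _ _ hb₀ hb]
  ring_nf

variable {ι : Type*} {e : ι → ℤ} {s₀ s₁ θ : ℝ}

theorem tsum_rpow_mul_rpow_le_iSup_mul_iSup (hb₁ : 1 < b) (hb : b ≠ ∞)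
    (he : Function.Injective e) (hs : s₁ < s₀) (hθ : θ ∈ Set.Ioo (0 : ℝ) 1) (hq : 0 < q)
    (x : ι → ℝ≥0∞) :
    (∑' i, (b ^ ((θ * s₀ + (1 - θ) * s₁) * e i) * x i) ^ q) ^ (1 / q)
      ≤ (∑' m : ℤ, interpolationKernel (b ^ ((s₀ - s₁) * q)) θ m) ^ (1 / q)
        * (⨆ i, b ^ (s₀ * e i) * x i) ^ θ * (⨆ i, b ^ (s₁ * e i) * x i) ^ (1 - θ) := by
  set A := ⨆ i, b ^ (s₀ * e i) * x i
  set B := ⨆ i, b ^ (s₁ * e i) * x i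
  set w := b ^ ((s₀ - s₁) * q)
  have hb₀ : b ≠ 0 := (zero_lt_one.trans hb₁).ne'
  have hδq : 0 < (s₀ - s₁) * q := mul_pos (sub_pos.2 hs) hq
  have hA (i : ι) : w ^ (e i : ℝ) * (b ^ (s₁ * e i) * x i) ^ q ≤ A ^ q := by
    have hweight := rpow_mul_mul_rpow_eq_mul_rpow hb₀ hb hq.le (s₀ - s₁) s₁ 1 (e i) (x i)
    rw [one_mul, one_mul, add_sub_cancel] at hweight
    rw [hweight]
    exact ENNReal.rpow_le_rpow (le_iSup (fun i ↦ b ^ (s₀ * e i) * x i) i) hq.le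
  have hB (i : ι) : (b ^ (s₁ * e i) * x i) ^ q ≤ B ^ q :=
    ENNReal.rpow_le_rpow (le_iSup (fun i ↦ b ^ (s₁ * e i) * x i) i) hq.le
  have hsum := tsum_rpow_mul_le (ENNReal.one_lt_rpow hb₁ hδq)
    (ENNReal.rpow_ne_top_of_nonneg hδq.le hb) hθ he hA hB
  have hs_interp : θ * s₀ + (1 - θ) * s₁ = s₁ + θ * (s₀ - s₁) := by ring
  have hq_cancel (y : ℝ≥0∞) (η : ℝ) : ((y ^ q) ^ η) ^ (1 / q) = y ^ η := by
    rw [← ENNReal.rpow_mul, ← ENNReal.rpow_mul]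
    field_simp
  simp only [rpow_mul_mul_rpow_eq_mul_rpow hb₀ hb hq.le, ← hs_interp] at hsum
  refine (ENNReal.rpow_le_rpow hsum (one_div_pos.2 hq).le).trans_eq ?_
  rw [ENNReal.mul_rpow_of_nonneg _ _ (one_div_pos.2 hq).le,
    ENNReal.mul_rpow_of_nonneg _ _ (one_div_pos.2 hq).le, hq_cancel, hq_cancel, mul_assoc]

end

theorem stmt0_general {ι : Type*} {e : ι → ℤ} (he : Function.Injective e) {b : ℝ≥0∞}
    (hb₁ : 1 < b) (hb : b ≠ ∞) {s₀ s₁ : ℝ} (hs : s₁ ≠ s₀) {θ : ℝ} (hθ : θ ∈ Set.Ioo (0 : ℝ) 1)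
    {q : ℝ} (hq : 0 < q) :
    ∃ c : ℝ≥0∞, 0 < c ∧ c ≠ ∞ ∧ ∀ x : ι → ℝ≥0∞,
      (∑' i, (b ^ ((θ * s₀ + (1 - θ) * s₁) * e i) * x i) ^ q) ^ (1 / q)
        ≤ c * (⨆ i, b ^ (s₀ * e i) * x i) ^ θ * (⨆ i, b ^ (s₁ * e i) * x i) ^ (1 - θ) := by
  wlog hlt : s₁ < s₀ generalizing s₀ s₁ θ
  · have hθ' : 1 - θ ∈ Set.Ioo (0 : ℝ) 1 := ⟨sub_pos.2 hθ.2, sub_lt_self 1 hθ.1⟩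
    obtain ⟨c, hc₀, hc, hbound⟩ := this hs.symm hθ' (hs.lt_or_gt.resolve_left hlt)
    refine ⟨c, hc₀, hc, fun x ↦ ?_⟩
    simpa only [sub_sub_cancel, add_comm, mul_right_comm] using hbound x
  have hw : 1 < b ^ ((s₀ - s₁) * q) :=
    ENNReal.one_lt_rpow hb₁ (mul_pos (sub_pos.2 hlt) hq)
  have hK_pos := zero_lt_one.trans_le (one_le_tsum_interpolationKernel hw.le hθ.1.le)
  have hK_top := (tsum_interpolationKernel_lt_top hw hθ).ne
  exact ⟨_, ENNReal.rpow_pos hK_pos hK_top,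
    ENNReal.rpow_ne_top_of_nonneg (one_div_pos.2 hq).le hK_top,
    tsum_rpow_mul_rpow_le_iSup_mul_iSup hb₁ hb he hlt hθ hq⟩

/-- Interpolation inequality for weighted sequence spaces `ℓ^s_q`:
for `s₁ < s₀`, `θ ∈ (0,1)` and `0 < q < ∞`, the `ℓ^{θs₀+(1-θ)s₁}_q` quasi-norm is bounded by
the product of the `θ`-th power of the `ℓ^{s₀}_∞` norm and the `(1-θ)`-th power
of the `ℓ^{s₁}_∞` norm. -/
theorem stmt0 (s₀ s₁ : ℝ) (hs : s₁ < s₀) (θ : ℝ) (hθ : θ ∈ Set.Ioo (0:ℝ) 1)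
    (q : ℝ) (hq : 0 < q) :
    ∃ c : ℝ≥0∞, 0 < c ∧ c ≠ ∞ ∧ ∀ a : ℕ → ℂ,
      (⨆ j : ℕ, (2:ℝ≥0∞) ^ (s₀ * (j:ℝ)) * ‖a j‖₊) < ∞ →
      (∑' j : ℕ, ((2:ℝ≥0∞) ^ ((θ * s₀ + (1 - θ) * s₁) * (j:ℝ)) * ‖a j‖₊) ^ q) ^ (1/q)
        ≤ c * (⨆ j : ℕ, (2:ℝ≥0∞) ^ (s₀ * (j:ℝ)) * ‖a j‖₊) ^ θ
            * (⨆ j : ℕ, (2:ℝ≥0∞) ^ (s₁ * (j:ℝ)) * ‖a j‖₊) ^ (1 - θ) := by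
  obtain ⟨c, hc₀, hc, hbound⟩ :=
    stmt0_general Nat.cast_injective ENNReal.one_lt_two ENNReal.ofNat_ne_top hs.ne hθ hq
  exact ⟨c, hc₀, hc, fun a _ ↦ by simpa only [Int.cast_natCast] using hbound fun j ↦ ‖a j‖₊⟩
end

section
/- (Nikol'skij–Plancherel–Polya inequality.) Let n ≥ 1 and let 0 < p ≤ r ≤ ∞. Then there exists a constant c > 0 such that for every R > 0 and every Schwartz function f : ℝⁿ → ℂ whose Fourier transform 𝓕f is supported in the closed ball of radius R centered at the origin, one has ‖f‖_r ≤ c · R^{n/p − n/r} · ‖f‖_p (with the convention n/∞ = 0). -/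
open scoped ENNReal NNReal FourierTransform SchwartzMap
open MeasureTheory

/-!
If `𝓕 f` is supported in a bounded set `K` and `χ` is a Schwartz function equal to `1` on `K`, then
`𝓕 f = χ 𝓕 f`, so `f` reproduces itself under convolution: `f = 𝓕⁻¹ χ ⋆ f`. For `1 ≤ p`, Hölder's
inequality bounds `‖f‖_∞` by `‖𝓕⁻¹ χ‖_{p'} ‖f‖_p`. For `p < 1`, insert `‖f‖₁ ≤ ‖f‖_∞^(1-p) ‖f‖_p^p`
into the case `p = 1` and divide by `‖f‖_∞^(1-p)`, which is finite since `f` is Schwartz.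
Interpolating between `p` and `∞` reaches every `r ≥ p`, and replacing `f` by `f (R⁻¹ •)` turns a
ball of radius `R` into the unit ball and produces the power of `R`.
-/

open Bornology Function
open Module (finrank)
open scoped Convolution

theorem eLpNorm_le_eLpNorm_top_rpow_mul_eLpNorm_rpow {α F : Type*} [MeasurableSpace α]
    {μ : Measure α} [NormedAddCommGroup F] {f : α → F} (hf : AEStronglyMeasurable f μ)
    {p r : ℝ≥0∞} (hp : p ≠ 0) (hpr : p ≤ r) :
    eLpNorm f r μ ≤
      eLpNorm f ∞ μ ^ (1 - (p / r).toReal) * eLpNorm f p μ ^ (p / r).toReal := by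
  rcases eq_or_ne r ∞ with rfl | hr
  · -- `p / ∞ = 0` in `ℝ≥0∞`, even for `p = ∞`.
    simp
  have hr₀ : r ≠ 0 := (hp.bot_lt.trans_le hpr).ne'
  rcases hpr.eq_or_lt with rfl | hlt
  · simp [ENNReal.div_self hp hr]
  have hdiv : p / r ≠ ∞ := (ENNReal.div_lt_top (hpr.trans_lt hr.lt_top).ne hr₀).ne
  set θ := (p / r).toReal
  have hθ₀ : 0 < θ := ENNReal.toReal_pos (ENNReal.div_pos hp hr).ne' hdiv
  have hθ₁ : θ < 1 := by
    simpa [θ] using (ENNReal.toReal_lt_toReal hdiv ENNReal.one_ne_top).2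
      (ENNReal.div_lt_of_lt_mul (by simpa using hlt))
  have hrθ : r * ENNReal.ofReal θ = p := by
    rw [ENNReal.ofReal_toReal hdiv, ENNReal.mul_div_cancel hr₀ hr]
  have hsplit : ∀ x, ‖f x‖ = ‖f x‖ ^ (1 - θ) * ‖f x‖ ^ θ := fun x ↦ by
    rw [← Real.rpow_add_of_nonneg (norm_nonneg _) (sub_pos.2 hθ₁).le hθ₀.le, sub_add_cancel,
      Real.rpow_one]
  calc eLpNorm f r μ
      = eLpNorm ((fun x ↦ ‖f x‖ ^ (1 - θ)) • fun x ↦ ‖f x‖ ^ θ) r μ := by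
        rw [← eLpNorm_norm]
        exact congrArg (eLpNorm · r μ) (funext hsplit)
    _ ≤ eLpNorm (fun x ↦ ‖f x‖ ^ (1 - θ)) ∞ μ * eLpNorm (fun x ↦ ‖f x‖ ^ θ) r μ :=
        eLpNorm_smul_le_eLpNorm_top_mul_eLpNorm r
          (hf.norm.aemeasurable.pow_const θ).aestronglyMeasurable _
    _ = eLpNorm f ∞ μ ^ (1 - θ) * eLpNorm f p μ ^ θ := by
        rw [eLpNorm_norm_rpow f (sub_pos.2 hθ₁), eLpNorm_norm_rpow f hθ₀, hrθ,
          ENNReal.top_mul (by simpa using hθ₁)]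

theorem enorm_convolution_le_eLpNorm_mul_eLpNorm {𝕜 G F₁ F₂ F₃ : Type*}
    [NontriviallyNormedField 𝕜] [NormedAddCommGroup F₁] [NormedSpace 𝕜 F₁] [NormedAddCommGroup F₂]
    [NormedSpace 𝕜 F₂] [NormedAddCommGroup F₃] [NormedSpace 𝕜 F₃] [NormedSpace ℝ F₃]
    [AddCommGroup G] [MeasurableSpace G] [MeasurableAdd G] [MeasurableNeg G] {μ : Measure G}
    [μ.IsAddLeftInvariant] [μ.IsNegInvariant]
    (L : F₁ →L[𝕜] F₂ →L[𝕜] F₃) {f : G → F₁} {g : G → F₂} (hf : AEStronglyMeasurable f μ)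
    (hg : AEStronglyMeasurable g μ) (p q : ℝ≥0∞) [p.HolderConjugate q] (x : G) :
    ‖(f ⋆[L, μ] g) x‖ₑ ≤ ‖L‖ₑ * eLpNorm f p μ * eLpNorm g q μ := by
  have hx : MeasurePreserving (x - ·) μ μ := Measure.measurePreserving_sub_left μ x
  calc ‖(f ⋆[L, μ] g) x‖ₑ
      ≤ eLpNorm (fun t ↦ L (f t) (g (x - t))) 1 μ := by
        rw [eLpNorm_one_eq_lintegral_enorm]
        exact enorm_integral_le_lintegral_enorm _
    _ ≤ ‖L‖ₑ * eLpNorm f p μ * eLpNorm (g ∘ (x - ·)) q μ :=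
        eLpNorm_le_eLpNorm_mul_eLpNorm_of_nnnorm hf (hg.comp_measurePreserving hx)
          (fun a b ↦ L a b) ‖L‖₊ (.of_forall fun _ ↦ L.le_opNorm₂ _ _)
    _ = ‖L‖ₑ * eLpNorm f p μ * eLpNorm g q μ := by
        rw [eLpNorm_comp_measurePreserving hg hx]

theorem le_rpow_inv_mul_of_le_mul_rpow_mul_rpow {M N c : ℝ≥0∞} {θ : ℝ} (hM : M ≠ ∞)
    (hθ : 0 < θ) (h : M ≤ c * (M ^ (1 - θ) * N ^ θ)) : M ≤ c ^ θ⁻¹ * N := by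
  rcases eq_or_ne M 0 with rfl | hM₀
  · exact zero_le
  have hpow : M ^ (1 - θ) * M ^ θ ≤ M ^ (1 - θ) * (c * N ^ θ) := by
    rwa [← ENNReal.rpow_add _ _ hM₀ hM, sub_add_cancel, ENNReal.rpow_one, mul_left_comm]
  have hcancel : M ^ θ ≤ c * N ^ θ :=
    (ENNReal.mul_le_mul_iff_right (by simp [hM₀, hM]) (by simp [hM₀, hM])).1 hpow
  calc M = (M ^ θ) ^ θ⁻¹ := (ENNReal.rpow_rpow_inv hθ.ne' M).symm
    _ ≤ (c * N ^ θ) ^ θ⁻¹ := by gcongr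
    _ = c ^ θ⁻¹ * N := by
      rw [ENNReal.mul_rpow_of_nonneg _ _ (inv_nonneg.2 hθ.le), ENNReal.rpow_rpow_inv hθ.ne']

section Dilation

variable {E F : Type*} [NormedAddCommGroup E] [NormedSpace ℝ E] [FiniteDimensional ℝ E]
  [MeasurableSpace E] [BorelSpace E] [NormedAddCommGroup F] (μ : Measure E) [μ.IsAddHaarMeasure]
  (f : E → F) {R : ℝ}

theorem eLpNorm_comp_inv_smul (p : ℝ≥0∞) (hR : 0 < R) :
    eLpNorm (fun x ↦ f (R⁻¹ • x)) p μ =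
      ENNReal.ofReal (R ^ (finrank ℝ E * p⁻¹.toReal)) * eLpNorm f p μ := by
  have hR' : R⁻¹ ≠ 0 := inv_ne_zero hR.ne'
  have hpos : 0 < R ^ finrank ℝ E := pow_pos hR _
  have hmap : μ.map (R⁻¹ • ·) = ENNReal.ofReal (R ^ finrank ℝ E) • μ := by
    rw [Measure.map_addHaar_smul μ hR', inv_pow, inv_inv, abs_of_pos hpos]
  calc eLpNorm (fun x ↦ f (R⁻¹ • x)) p μ
      = eLpNorm f p (μ.map (R⁻¹ • ·)) :=
        ((measurableEmbedding_const_smul₀ hR').eLpNorm_map_measure).symm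
    _ = ENNReal.ofReal (R ^ finrank ℝ E) ^ p⁻¹.toReal * eLpNorm f p μ := by
        rw [hmap, eLpNorm_smul_measure_of_ne_zero (by simpa using hpos), one_div, smul_eq_mul]
    _ = ENNReal.ofReal (R ^ (finrank ℝ E * p⁻¹.toReal)) * eLpNorm f p μ := by
        rw [ENNReal.ofReal_rpow_of_pos hpos, Real.rpow_natCast_mul hR.le]

theorem eLpNorm_le_of_eLpNorm_comp_inv_smul_le {c p r : ℝ≥0∞} (hR : 0 < R)
    (hdilated : eLpNorm (fun x ↦ f (R⁻¹ • x)) r μ ≤ c * eLpNorm (fun x ↦ f (R⁻¹ • x)) p μ) :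
    eLpNorm f r μ ≤
      c * ENNReal.ofReal (R ^ (finrank ℝ E * (p⁻¹.toReal - r⁻¹.toReal))) * eLpNorm f p μ := by
  rw [eLpNorm_comp_inv_smul μ f r hR, eLpNorm_comp_inv_smul μ f p hR] at hdilated
  set n := (finrank ℝ E : ℝ)
  calc eLpNorm f r μ
      = ENNReal.ofReal (R ^ (-(n * r⁻¹.toReal))) *
          (ENNReal.ofReal (R ^ (n * r⁻¹.toReal)) * eLpNorm f r μ) := by
        rw [← mul_assoc, ← ENNReal.ofReal_mul (by positivity), ← Real.rpow_add hR, neg_add_cancel,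
          Real.rpow_zero, ENNReal.ofReal_one, one_mul]
    _ ≤ ENNReal.ofReal (R ^ (-(n * r⁻¹.toReal))) *
          (c * (ENNReal.ofReal (R ^ (n * p⁻¹.toReal)) * eLpNorm f p μ)) := by
        gcongr
    _ = c * ENNReal.ofReal (R ^ (n * (p⁻¹.toReal - r⁻¹.toReal))) * eLpNorm f p μ := by
        rw [mul_sub, sub_eq_neg_add, Real.rpow_add hR, ENNReal.ofReal_mul (by positivity)]
        ring

end Dilation

theorem exists_schwartzMap_eqOn_one {E : Type*} [NormedAddCommGroup E] [NormedSpace ℝ E]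
    [FiniteDimensional ℝ E] {K : Set E} (hK : IsBounded K) :
    ∃ χ : 𝓢(E, ℂ), Set.EqOn χ 1 K := by
  obtain ⟨ρ, hρ, hKρ⟩ := hK.subset_closedBall_lt 0 0
  let b : ContDiffBump (0 : E) := ⟨ρ, ρ + 1, hρ, lt_add_one ρ⟩
  have hsupp : HasCompactSupport (Complex.ofRealCLM ∘ b) := b.hasCompactSupport.comp_left rfl
  refine ⟨hsupp.toSchwartzMap (Complex.ofRealCLM.contDiff.comp b.contDiff), fun ξ hξ ↦ ?_⟩
  simp [b.one_of_mem_closedBall (hKρ hξ)]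

section Fourier

variable {E F : Type*} [NormedAddCommGroup E] [InnerProductSpace ℝ E] [FiniteDimensional ℝ E]
  [MeasurableSpace E] [BorelSpace E] [NormedAddCommGroup F] [NormedSpace ℂ F]

theorem fourier_comp_inv_smul (f : E → F) {R : ℝ} (hR : R ≠ 0) (ξ : E) :
    𝓕 (fun x ↦ f (R⁻¹ • x)) ξ = |R ^ finrank ℝ E| • 𝓕 f (R • ξ) := by
  rw [Real.fourier_eq, Real.fourier_eq, ← Measure.integral_comp_inv_smul]
  congr! 4 with x
  rw [inner_smul_left, inner_smul_right, RCLike.conj_to_real, inv_mul_cancel_left₀ hR]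

theorem support_fourier_comp_inv_smul_subset {f : E → F} {R : ℝ} (hR : 0 < R)
    (hf : support (𝓕 f) ⊆ Metric.closedBall 0 R) :
    support (𝓕 fun x ↦ f (R⁻¹ • x)) ⊆ Metric.closedBall 0 1 := by
  intro ξ hξ
  have hmem : R • ξ ∈ support (𝓕 f) := by
    rw [mem_support, fourier_comp_inv_smul _ hR.ne'] at hξ
    exact right_ne_zero_of_smul hξ
  simpa [norm_smul, abs_of_pos hR, hR] using hf hmem

variable [CompleteSpace F]

theorem eq_fourierInv_convolution_of_eqOn_one {χ : 𝓢(E, ℂ)} {f : 𝓢(E, F)}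
    (hχ : Set.EqOn χ 1 (support (𝓕 (f : E → F)))) :
    (f : E → F) = (𝓕⁻ χ : 𝓢(E, ℂ)) ⋆[ContinuousLinearMap.lsmul ℂ ℂ] f := by
  suffices hconv : f = SchwartzMap.convolution (.lsmul ℂ ℂ) (𝓕⁻ χ) f from
    funext fun x ↦ (DFunLike.congr_fun hconv x).trans (SchwartzMap.convolution_apply _ _ _ x)
  suffices hfourier : 𝓕 f = 𝓕 (SchwartzMap.convolution (.lsmul ℂ ℂ) (𝓕⁻ χ) f) by
    simpa using congrArg (𝓕⁻ ·) hfourier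
  ext ξ
  have hcutoff : 𝓕 f ξ = χ ξ • 𝓕 f ξ := by
    by_cases hξ : 𝓕 (f : E → F) ξ = 0
    · rw [SchwartzMap.fourier_coe, hξ, smul_zero]
    · rw [hχ hξ, Pi.one_apply, one_smul]
  simpa [SchwartzMap.fourier_convolution] using hcutoff

theorem exists_eLpNorm_top_le_mul_eLpNorm_of_isBounded_spectrum_of_one_le {K : Set E}
    (hK : IsBounded K) {p : ℝ≥0∞} (hp : 1 ≤ p) :
    ∃ c : ℝ≥0∞, c ≠ ∞ ∧ ∀ f : 𝓢(E, F), support (𝓕 (f : E → F)) ⊆ K →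
      eLpNorm f ∞ volume ≤ c * eLpNorm f p volume := by
  obtain ⟨χ, hχ⟩ := exists_schwartzMap_eqOn_one hK
  have : p.HolderConjugate p.conjExponent := .conjExponent hp
  have : p.conjExponent.HolderConjugate p := .symm
  set L : ℂ →L[ℂ] F →L[ℂ] F := .lsmul ℂ ℂ
  refine ⟨‖L‖ₑ * eLpNorm (𝓕⁻ χ : 𝓢(E, ℂ)) p.conjExponent volume,
    ENNReal.mul_ne_top enorm_ne_top (SchwartzMap.eLpNorm_lt_top _ _ _).ne, fun f hf ↦ ?_⟩
  rw [eLpNorm_exponent_top]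
  refine eLpNormEssSup_le_of_ae_enorm_bound (.of_forall fun x ↦ ?_)
  rw [congrFun (eq_fourierInv_convolution_of_eqOn_one (hχ.mono hf)) x]
  exact enorm_convolution_le_eLpNorm_mul_eLpNorm L (𝓕⁻ χ).continuous.aestronglyMeasurable
    f.continuous.aestronglyMeasurable _ _ x

theorem exists_eLpNorm_top_le_mul_eLpNorm_of_isBounded_spectrum {K : Set E} (hK : IsBounded K)
    {p : ℝ≥0∞} (hp : p ≠ 0) :
    ∃ c : ℝ≥0∞, c ≠ ∞ ∧ ∀ f : 𝓢(E, F), support (𝓕 (f : E → F)) ⊆ K →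
      eLpNorm f ∞ volume ≤ c * eLpNorm f p volume := by
  rcases le_total 1 p with h1p | hp1
  · exact exists_eLpNorm_top_le_mul_eLpNorm_of_isBounded_spectrum_of_one_le hK h1p
  obtain ⟨c, hc, hsup⟩ :=
    exists_eLpNorm_top_le_mul_eLpNorm_of_isBounded_spectrum_of_one_le (F := F) hK le_rfl
  have hp_top : p ≠ ∞ := ne_top_of_le_ne_top ENNReal.one_ne_top hp1
  refine ⟨c ^ p.toReal⁻¹, ENNReal.rpow_ne_top_of_nonneg (by positivity) hc, fun f hf ↦ ?_⟩
  have hp_pos : 0 < p.toReal := ENNReal.toReal_pos hp hp_top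
  have hf_top : eLpNorm f ∞ volume ≠ ∞ := (f.eLpNorm_lt_top ∞ volume).ne
  refine le_rpow_inv_mul_of_le_mul_rpow_mul_rpow hf_top hp_pos ?_
  calc eLpNorm f ∞ volume ≤ c * eLpNorm f 1 volume := hsup f hf
    _ ≤ c * (eLpNorm f ∞ volume ^ (1 - p.toReal) * eLpNorm f p volume ^ p.toReal) := by
      gcongr
      simpa using eLpNorm_le_eLpNorm_top_rpow_mul_eLpNorm_rpow
        f.continuous.aestronglyMeasurable hp hp1

theorem exists_eLpNorm_le_mul_eLpNorm_of_isBounded_spectrum {K : Set E} (hK : IsBounded K)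
    {p r : ℝ≥0∞} (hp : p ≠ 0) (hpr : p ≤ r) :
    ∃ c : ℝ≥0∞, c ≠ ∞ ∧ ∀ f : 𝓢(E, F), support (𝓕 (f : E → F)) ⊆ K →
      eLpNorm f r volume ≤ c * eLpNorm f p volume := by
  obtain ⟨c, hc, hsup⟩ := exists_eLpNorm_top_le_mul_eLpNorm_of_isBounded_spectrum (F := F) hK hp
  set θ := (p / r).toReal
  have hθ₀ : 0 ≤ θ := ENNReal.toReal_nonneg
  have hθ₁ : 0 ≤ 1 - θ := sub_nonneg.2 <|
    ENNReal.toReal_le_of_le_ofReal zero_le_one (by simpa using ENNReal.div_le_of_le_mul (by simpa))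
  refine ⟨c ^ (1 - θ), ENNReal.rpow_ne_top_of_nonneg hθ₁ hc, fun f hf ↦ ?_⟩
  calc eLpNorm f r volume
      ≤ eLpNorm f ∞ volume ^ (1 - θ) * eLpNorm f p volume ^ θ :=
        eLpNorm_le_eLpNorm_top_rpow_mul_eLpNorm_rpow f.continuous.aestronglyMeasurable hp hpr
    _ ≤ (c * eLpNorm f p volume) ^ (1 - θ) * eLpNorm f p volume ^ θ := by
        gcongr
        exact hsup f hf
    _ = c ^ (1 - θ) * eLpNorm f p volume := by
        rw [ENNReal.mul_rpow_of_nonneg _ _ hθ₁, mul_assoc,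
          ← ENNReal.rpow_add_of_nonneg _ _ hθ₁ hθ₀, sub_add_cancel, ENNReal.rpow_one]

theorem stmt2_general {p r : ℝ≥0∞} (hp : 0 < p) (hpr : p ≤ r) :
    ∃ c : ℝ≥0∞, 0 < c ∧ c ≠ ∞ ∧ ∀ R : ℝ, 0 < R → ∀ f : 𝓢(E, F),
      support (𝓕 (f : E → F)) ⊆ Metric.closedBall 0 R →
      eLpNorm f r volume ≤
        c * ENNReal.ofReal (R ^ (finrank ℝ E * (p⁻¹.toReal - r⁻¹.toReal))) *
          eLpNorm f p volume := by
  obtain ⟨c, hc, hunit⟩ := exists_eLpNorm_le_mul_eLpNorm_of_isBounded_spectrum (E := E) (F := F)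
    (Metric.isBounded_closedBall (x := 0) (r := 1)) hp.ne' hpr
  refine ⟨c + 1, by simp, by simp [hc], fun R hR f hf ↦ ?_⟩
  let dilation : E ≃L[ℝ] E := .smulLeft (Units.mk0 R⁻¹ (inv_ne_zero hR.ne'))
  apply eLpNorm_le_of_eLpNorm_comp_inv_smul_le volume f hR
  calc eLpNorm (fun x ↦ f (R⁻¹ • x)) r volume
      ≤ c * eLpNorm (fun x ↦ f (R⁻¹ • x)) p volume :=
        hunit (f.compCLMOfContinuousLinearEquiv ℝ dilation)
          (support_fourier_comp_inv_smul_subset hR hf)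
    _ ≤ (c + 1) * eLpNorm (fun x ↦ f (R⁻¹ • x)) p volume := by
        gcongr
        exact le_self_add

end Fourier

/-- Nikol'skij–Plancherel–Polya inequality: for `0 < p ≤ r ≤ ∞` there is a constant `c > 0`
such that every Schwartz function whose Fourier transform is supported in the closed ball of
radius `R` satisfies `‖f‖_r ≤ c R^(n/p - n/r) ‖f‖_p` (with the convention `n/∞ = 0`). -/
theorem stmt2 (n : ℕ) (hn : 1 ≤ n) (p r : ℝ≥0∞) (hp : 0 < p) (hpr : p ≤ r) :
    ∃ c : ℝ≥0∞, 0 < c ∧ c ≠ ∞ ∧ ∀ (R : ℝ), 0 < R →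
      ∀ f : 𝓢(EuclideanSpace ℝ (Fin n), ℂ),
        Function.support (𝓕 (f : EuclideanSpace ℝ (Fin n) → ℂ)) ⊆ Metric.closedBall 0 R →
        eLpNorm (f : EuclideanSpace ℝ (Fin n) → ℂ) r volume
          ≤ c * ENNReal.ofReal (R ^ ((n:ℝ) * (p⁻¹.toReal - r⁻¹.toReal)))
              * eLpNorm (f : EuclideanSpace ℝ (Fin n) → ℂ) p volume := by
  simpa only [finrank_euclideanSpace_fin] using
    stmt2_general (E := EuclideanSpace ℝ (Fin n)) (F := ℂ) hp hpr
end

section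
/- Let ψ : ℝⁿ → ℂ be a Schwartz function with 𝓕ψ(ξ) = 1 for all |ξ| ≤ 1, and let 0 < p < 1. Then for every R > 0 and every Schwartz function u : ℝⁿ → ℂ with support of 𝓕u contained in the closed ball of radius R about the origin, one has sup_{x∈ℝⁿ} |u(x)|^p ≤ Rⁿ · (sup_{z∈ℝⁿ}|ψ(z)|) · ∫_{ℝⁿ} |u(y)|^p dy. -/
open scoped ENNReal NNReal FourierTransform SchwartzMap
open MeasureTheory

/-!
Dilating `ψ` to `Ψ(x) = Rⁿ ψ(R x)` makes `𝓕 Ψ = 1` on the spectrum of `u`, so `u = Ψ ⋆ u` and hence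
`|u| ≤ sup |Ψ| · ∫ |u|`. Splitting `|u| ≤ (sup |u|)^(1 - p) |u|^p` under the integral and cancelling
the finite factor `(sup |u|)^(1 - p)` gives the bound for `sup |u|^p`.
-/

open Module (finrank)
open scoped Convolution
open ContinuousLinearMap (lsmul)

section SelfImprovement

variable {X : Type*} [MeasurableSpace X] {μ : Measure X} {f : X → ℝ≥0∞} {p : ℝ}

lemma lintegral_le_iSup_rpow_mul_lintegral_rpow (hp : 0 ≤ p) (hp1 : p ≤ 1)
    (hf : ⨆ x, f x ≠ ∞) :
    ∫⁻ x, f x ∂μ ≤ (⨆ x, f x) ^ (1 - p) * ∫⁻ x, f x ^ p ∂μ := by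
  have hp' : 0 ≤ 1 - p := sub_nonneg.2 hp1
  rw [← lintegral_const_mul' _ _ (ENNReal.rpow_ne_top_of_nonneg hp' hf)]
  refine lintegral_mono fun x ↦ ?_
  calc f x = f x ^ (1 - p) * f x ^ p := by
        rw [← ENNReal.rpow_add_of_nonneg _ _ hp' hp, sub_add_cancel, ENNReal.rpow_one]
    _ ≤ (⨆ x, f x) ^ (1 - p) * f x ^ p := by
        gcongr
        exact le_iSup f x

lemma iSup_rpow_le_mul_lintegral_rpow {K : ℝ≥0∞} (hp : 0 < p) (hp1 : p ≤ 1)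
    (hf : ⨆ x, f x ≠ ∞) (hfK : ∀ x, f x ≤ K * ∫⁻ y, f y ∂μ) :
    (⨆ x, f x) ^ p ≤ K * ∫⁻ x, f x ^ p ∂μ := by
  set M := ⨆ x, f x
  obtain hM0 | hM0 := eq_or_ne M 0
  · simp [hM0, ENNReal.zero_rpow_of_pos hp]
  have hp' : 0 ≤ 1 - p := sub_nonneg.2 hp1
  have hfactor_ne_zero : M ^ (1 - p) ≠ 0 := (ENNReal.rpow_pos hM0.bot_lt hf).ne'
  have hfactor_ne_top : M ^ (1 - p) ≠ ∞ := ENNReal.rpow_ne_top_of_nonneg hp' hf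
  refine (ENNReal.mul_le_mul_iff_right hfactor_ne_zero hfactor_ne_top).1 ?_
  calc M ^ (1 - p) * M ^ p = M := by
        rw [← ENNReal.rpow_add_of_nonneg _ _ hp' hp.le, sub_add_cancel, ENNReal.rpow_one]
    _ ≤ K * ∫⁻ x, f x ∂μ := iSup_le hfK
    _ ≤ K * (M ^ (1 - p) * ∫⁻ x, f x ^ p ∂μ) := by
        gcongr
        exact lintegral_le_iSup_rpow_mul_lintegral_rpow hp.le hp1 hf
    _ = M ^ (1 - p) * (K * ∫⁻ x, f x ^ p ∂μ) := mul_left_comm _ _ _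

end SelfImprovement

lemma enorm_convolution_le_iSup_mul_lintegral {𝕜 G E E' F : Type*} [NontriviallyNormedField 𝕜]
    [NormedAddCommGroup E] [NormedSpace 𝕜 E] [NormedAddCommGroup E'] [NormedSpace 𝕜 E']
    [NormedAddCommGroup F] [NormedSpace 𝕜 F] [NormedSpace ℝ F]
    [AddGroup G] [MeasurableSpace G] [MeasurableAdd G] [MeasurableNeg G]
    {μ : Measure G} [μ.IsAddLeftInvariant] [μ.IsNegInvariant]
    (L : E →L[𝕜] E' →L[𝕜] F) (f : G → E) {g : G → E'} (hg : AEStronglyMeasurable g μ) (x : G) :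
    ‖(f ⋆[L, μ] g) x‖ₑ ≤ ‖L‖ₑ * (⨆ t, ‖f t‖ₑ) * ∫⁻ t, ‖g t‖ₑ ∂μ :=
  calc ‖(f ⋆[L, μ] g) x‖ₑ ≤ ∫⁻ t, ‖L (f t) (g (x - t))‖ₑ ∂μ :=
        enorm_integral_le_lintegral_enorm _
    _ ≤ ∫⁻ t, ‖L‖ₑ * (⨆ t, ‖f t‖ₑ) * ‖g (x - t)‖ₑ ∂μ := by
        refine lintegral_mono fun t ↦ (L.le_opENorm₂ _ _).trans ?_
        gcongr
        exact le_iSup (fun t ↦ ‖f t‖ₑ) t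
    _ = ∫⁻ t, ‖L‖ₑ * (⨆ t, ‖f t‖ₑ) * ‖g t‖ₑ ∂μ :=
        lintegral_sub_left_eq_self (fun t ↦ ‖L‖ₑ * (⨆ t, ‖f t‖ₑ) * ‖g t‖ₑ) x
    _ = ‖L‖ₑ * (⨆ t, ‖f t‖ₑ) * ∫⁻ t, ‖g t‖ₑ ∂μ := lintegral_const_mul'' _ hg.enorm

section Dilation

variable {V F : Type*} [NormedAddCommGroup V] [NormedAddCommGroup F] [NormedSpace ℝ F]

/-- The dilation `x ↦ |R|ⁿ f(R x)` with `n = dim V`, normalised to preserve integrals. It turns a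
kernel whose Fourier transform is `1` on the unit ball into one for the ball of radius `|R|`. -/
noncomputable def l1Dilation [NormedSpace ℝ V] (R : ℝ) (f : V → F) (x : V) : F :=
  |R ^ finrank ℝ V| • f (R • x)

lemma iSup_enorm_l1Dilation_le [NormedSpace ℝ V] (R : ℝ) (f : V → F) :
    ⨆ x, ‖l1Dilation R f x‖ₑ ≤ ENNReal.ofReal |R ^ finrank ℝ V| * ⨆ x, ‖f x‖ₑ := by
  refine iSup_le fun x ↦ ?_
  rw [l1Dilation, enorm_smul, Real.enorm_of_nonneg (abs_nonneg _)]
  gcongr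
  exact le_iSup (fun z ↦ ‖f z‖ₑ) (R • x)

variable [MeasurableSpace V] [BorelSpace V]

lemma integrable_l1Dilation [NormedSpace ℝ V] [FiniteDimensional ℝ V] {μ : Measure V}
    [μ.IsAddHaarMeasure] {R : ℝ} (hR : R ≠ 0) {f : V → F} (hf : Integrable f μ) :
    Integrable (l1Dilation R f) μ :=
  (hf.comp_smul hR).smul _

lemma fourier_l1Dilation {E : Type*} [NormedAddCommGroup E] [NormedSpace ℂ E]
    [InnerProductSpace ℝ V] [FiniteDimensional ℝ V] {R : ℝ} (hR : R ≠ 0) (f : V → E) (ξ : V) :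
    𝓕 (l1Dilation R f) ξ = 𝓕 f (R⁻¹ • ξ) := by
  have hint : ∀ v, 𝐞 (-inner ℝ v ξ) • l1Dilation R f v =
      |R ^ finrank ℝ V| • (𝐞 (-inner ℝ (R • v) (R⁻¹ • ξ)) • f (R • v)) := fun v ↦ by
    rw [l1Dilation, real_inner_smul_left, real_inner_smul_right, mul_inv_cancel_left₀ hR,
      smul_comm]
  simp_rw [Real.fourier_eq, hint]
  rw [integral_smul, Measure.integral_comp_smul volume
    (fun v ↦ 𝐞 (-inner ℝ v (R⁻¹ • ξ)) • f v), smul_smul, ← abs_mul,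
    mul_inv_cancel₀ (pow_ne_zero _ hR), abs_one, one_smul]

end Dilation

section BandLimited

variable {V F : Type*} [NormedAddCommGroup V] [InnerProductSpace ℝ V] [FiniteDimensional ℝ V]
  [MeasurableSpace V] [BorelSpace V] [NormedAddCommGroup F] [NormedSpace ℂ F] {u : V → F}

lemma integrable_fourier_of_support_subset_isCompact (hu : Integrable u) {K : Set V}
    (hK : IsCompact K) (hsupp : Function.support (𝓕 u) ⊆ K) : Integrable (𝓕 u) := by
  have hcont : Continuous (𝓕 u) :=
    VectorFourier.fourierIntegral_continuous Real.continuous_fourierChar continuous_inner hu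
  exact hcont.integrable_of_hasCompactSupport (.of_support_subset_isCompact hK hsupp)

variable [CompleteSpace F]

lemma norm_le_integral_norm_fourier (hu : Integrable u) (hcont : Continuous u)
    (hFu : Integrable (𝓕 u)) (x : V) : ‖u x‖ ≤ ∫ ξ, ‖𝓕 u ξ‖ := by
  rw [← congrFun (hcont.fourierInv_fourier_eq hu hFu) x, Real.fourierInv_eq]
  exact (norm_integral_le_integral_norm _).trans_eq (by simp only [Circle.norm_smul])

lemma iSup_enorm_ne_top_of_integrable_fourier (hu : Integrable u) (hcont : Continuous u)
    (hFu : Integrable (𝓕 u)) : ⨆ x, ‖u x‖ₑ ≠ ∞ := by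
  refine ne_top_of_le_ne_top (ENNReal.ofReal_ne_top (r := ∫ ξ, ‖𝓕 u ξ‖)) (iSup_le fun x ↦ ?_)
  rw [← ofReal_norm]
  exact ENNReal.ofReal_le_ofReal (norm_le_integral_norm_fourier hu hcont hFu x)

lemma convolution_eq_right_of_fourier_eq_one {f : V → ℂ} (hf : Integrable f)
    (hu : Integrable u) (hcont : Continuous u) (hFu : Integrable (𝓕 u))
    (hone : ∀ ξ ∈ Function.support (𝓕 u), 𝓕 f ξ = 1) : f ⋆[lsmul ℂ ℂ] u = u := by
  have hbdd : BddAbove (Set.range fun x ↦ ‖u x‖) :=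
    ⟨_, Set.forall_mem_range.2 (norm_le_integral_norm_fourier hu hcont hFu)⟩
  have hconv_int : Integrable (f ⋆[lsmul ℂ ℂ] u) := hf.integrable_convolution _ hu
  have hconv_cont : Continuous (f ⋆[lsmul ℂ ℂ] u) :=
    hbdd.continuous_convolution_right_of_integrable _ hf hcont
  have hfourier : 𝓕 (f ⋆[lsmul ℂ ℂ] u) = 𝓕 u := by
    ext ξ
    rw [Real.fourier_smul_convolution_eq hf hu]
    by_cases hξ : 𝓕 u ξ = 0
    · rw [hξ, smul_zero]
    · rw [hone ξ hξ, one_smul]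
  rw [← hconv_cont.fourierInv_fourier_eq hconv_int (hfourier ▸ hFu), hfourier,
    hcont.fourierInv_fourier_eq hu hFu]

lemma enorm_le_iSup_enorm_mul_lintegral_enorm {f : V → ℂ} (hf : Integrable f)
    (hu : Integrable u) (hcont : Continuous u) (hFu : Integrable (𝓕 u))
    (hone : ∀ ξ ∈ Function.support (𝓕 u), 𝓕 f ξ = 1) (x : V) :
    ‖u x‖ₑ ≤ (⨆ z, ‖f z‖ₑ) * ∫⁻ y, ‖u y‖ₑ := by
  calc ‖u x‖ₑ = ‖(f ⋆[lsmul ℂ ℂ] u) x‖ₑ := by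
        rw [convolution_eq_right_of_fourier_eq_one hf hu hcont hFu hone]
    _ ≤ ‖(lsmul ℂ ℂ : ℂ →L[ℂ] F →L[ℂ] F)‖ₑ * (⨆ z, ‖f z‖ₑ) * ∫⁻ y, ‖u y‖ₑ :=
        enorm_convolution_le_iSup_mul_lintegral _ f hu.aestronglyMeasurable x
    _ ≤ (⨆ z, ‖f z‖ₑ) * ∫⁻ y, ‖u y‖ₑ := by
        grw [ContinuousLinearMap.opENorm_lsmul_le, one_mul]

theorem stmt5_general {ψ : V → ℂ} (hψ : Integrable ψ) (hone : ∀ ξ, ‖ξ‖ ≤ 1 → 𝓕 ψ ξ = 1)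
    {p : ℝ} (hp : 0 < p) (hp1 : p ≤ 1) {R : ℝ} (hR : 0 < R)
    (hu : Integrable u) (hcont : Continuous u)
    (hsupp : Function.support (𝓕 u) ⊆ Metric.closedBall 0 R) :
    ⨆ x, ‖u x‖ₑ ^ p ≤
      ENNReal.ofReal (R ^ finrank ℝ V) * (⨆ z, ‖ψ z‖ₑ) * ∫⁻ y, ‖u y‖ₑ ^ p := by
  have hFu : Integrable (𝓕 u) :=
    integrable_fourier_of_support_subset_isCompact hu (isCompact_closedBall 0 R) hsupp
  have hΨ_one : ∀ ξ ∈ Function.support (𝓕 u), 𝓕 (l1Dilation R ψ) ξ = 1 := fun ξ hξ ↦ by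
    have hξR : ‖ξ‖ ≤ R := mem_closedBall_zero_iff.1 (hsupp hξ)
    rw [fourier_l1Dilation hR.ne']
    refine hone _ ?_
    rwa [norm_smul, norm_inv, Real.norm_of_nonneg hR.le, inv_mul_le_iff₀ hR, mul_one]
  have hΨ_sup : ⨆ z, ‖l1Dilation R ψ z‖ₑ ≤ ENNReal.ofReal (R ^ finrank ℝ V) * ⨆ z, ‖ψ z‖ₑ := by
    simpa only [abs_of_pos (pow_pos hR _)] using iSup_enorm_l1Dilation_le R ψ
  calc ⨆ x, ‖u x‖ₑ ^ p ≤ (⨆ x, ‖u x‖ₑ) ^ p :=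
        iSup_le fun x ↦ ENNReal.rpow_le_rpow (le_iSup (fun x ↦ ‖u x‖ₑ) x) hp.le
    _ ≤ (⨆ z, ‖l1Dilation R ψ z‖ₑ) * ∫⁻ y, ‖u y‖ₑ ^ p :=
        iSup_rpow_le_mul_lintegral_rpow hp hp1
          (iSup_enorm_ne_top_of_integrable_fourier hu hcont hFu)
          (enorm_le_iSup_enorm_mul_lintegral_enorm (integrable_l1Dilation hR.ne' hψ) hu hcont hFu
            hΨ_one)
    _ ≤ ENNReal.ofReal (R ^ finrank ℝ V) * (⨆ z, ‖ψ z‖ₑ) * ∫⁻ y, ‖u y‖ₑ ^ p := by gcongr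

end BandLimited

/-- For `0 < p < 1`: `sup_x |u(x)|^p ≤ Rⁿ (sup_z |ψ(z)|) ∫ |u(y)|^p dy` for band-limited
Schwartz functions `u` with `supp 𝓕u ⊆ B(0,R)`, where `𝓕ψ = 1` on the unit ball. -/
theorem stmt5 (n : ℕ) (ψ : 𝓢(EuclideanSpace ℝ (Fin n), ℂ))
    (hψ : ∀ ξ : EuclideanSpace ℝ (Fin n), ‖ξ‖ ≤ 1 →
      𝓕 (ψ : EuclideanSpace ℝ (Fin n) → ℂ) ξ = 1)
    (p : ℝ) (hp : 0 < p) (hp1 : p < 1) :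
    ∀ (R : ℝ), 0 < R →
      ∀ u : 𝓢(EuclideanSpace ℝ (Fin n), ℂ),
        Function.support (𝓕 (u : EuclideanSpace ℝ (Fin n) → ℂ)) ⊆ Metric.closedBall 0 R →
        (⨆ x : EuclideanSpace ℝ (Fin n), (‖u x‖₊ : ℝ≥0∞) ^ p)
          ≤ ENNReal.ofReal (R ^ n) * (⨆ z : EuclideanSpace ℝ (Fin n), (‖ψ z‖₊ : ℝ≥0∞))
              * ∫⁻ y : EuclideanSpace ℝ (Fin n), (‖u y‖₊ : ℝ≥0∞) ^ p := by
  intro R hR u hu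
  simpa only [finrank_euclideanSpace_fin, enorm_eq_nnnorm] using
    stmt5_general ψ.integrable hψ hp hp1.le hR u.integrable u.continuous hu
end

section
/- (Mixed-norm Nikol'skij–Plancherel–Polya inequality in two variables.) Let 0 < p₁ ≤ r₁ < ∞ and 0 < p₂ ≤ r₂ < ∞. Then there exists a constant c > 0 such that for all R₁, R₂ > 0 and every Schwartz function f : ℝ² → ℂ whose Fourier transform is supported in the rectangle [−R₁, R₁] × [−R₂, R₂], one has (∫_ℝ (∫_ℝ |f(x₁,x₂)|^{r₁} dx₁)^{r₂/r₁} dx₂)^{1/r₂} ≤ c · R₁^{1/p₁ − 1/r₁} · R₂^{1/p₂ − 1/r₂} · (∫_ℝ (∫_ℝ |f(x₁,x₂)|^{p₁} dx₁)^{p₂/p₁} dx₂)^{1/p₂}. -/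
open scoped ENNReal NNReal FourierTransform SchwartzMap
open MeasureTheory

/-- The point `(x₁, x₂)` of the Euclidean plane. -/
noncomputable def pt (x₁ x₂ : ℝ) : EuclideanSpace ℝ (Fin 2) :=
  (EuclideanSpace.equiv (Fin 2) ℝ).symm ![x₁, x₂]

/-!
Let `f` have spectrum in the rectangle. Along the line in a coordinate direction, `f` equals its
convolution with a Schwartz kernel at scale `1 / R`, so `|f|` is dominated by its own averages at
that scale against rapidly decaying weights. This self-averaging property passes to positive
powers, by Jensen's inequality for exponents `q ≥ 1` and by Peetre's maximal function for `q ≤ 1`,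
and it passes to integrals over a parameter; hence it is inherited by `x₂ ↦ ‖f(·, x₂)‖_{p₁}`.
A self-averaging `G` satisfies `sup G ^ p ≤ c R ∫ G ^ p`, which gives Nikol'skij's inequality
`‖G‖_r ≤ c R ^ (1 / p - 1 / r) ‖G‖_p`. Apply this to `f(·, x₂)` for each `x₂`, and then to
`x₂ ↦ ‖f(·, x₂)‖_{p₁}`.
-/

section ENNRealPowers

variable {a b c : ℝ≥0∞} {q : ℝ}

lemma rpow_le_of_le_mul_rpow_one_sub (hq : 0 < q) (ha : a ≠ ∞) (h : a ≤ b * a ^ (1 - q)) :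
    a ^ q ≤ b := by
  rcases eq_or_ne a 0 with rfl | ha₀
  · simp [ENNReal.zero_rpow_of_pos hq]
  have hpos : a ^ (1 - q) ≠ 0 := by simp [ENNReal.rpow_eq_zero_iff, ha₀, ha]
  have htop : a ^ (1 - q) ≠ ∞ := by simp [ENNReal.rpow_eq_top_iff, ha₀, ha]
  refine (ENNReal.mul_le_mul_iff_left hpos htop).1 ?_
  calc a ^ q * a ^ (1 - q) = a := by rw [← ENNReal.rpow_add _ _ ha₀ ha]; simp
    _ ≤ b * a ^ (1 - q) := h

lemma le_rpow_one_sub_mul_rpow (hq₀ : 0 ≤ q) (hq₁ : q ≤ 1) (h : a ≤ b) :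
    a ≤ b ^ (1 - q) * a ^ q :=
  calc a = a ^ (1 - q) * a ^ q := by
        rw [← ENNReal.rpow_add_of_nonneg _ _ (sub_nonneg.2 hq₁) hq₀]; simp
    _ ≤ b ^ (1 - q) * a ^ q := by gcongr

end ENNRealPowers

section Lebesgue

variable {α : Type*} [MeasurableSpace α] {μ : Measure α} {G : α → ℝ≥0∞}

lemma lintegral_rpow_le_measure_univ_rpow_mul {q : ℝ} (hq : 1 ≤ q) (hG : AEMeasurable G μ) :
    (∫⁻ x, G x ∂μ) ^ q ≤ μ Set.univ ^ (q - 1) * ∫⁻ x, G x ^ q ∂μ := by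
  have hq₀ : 0 < q := by linarith
  have h := eLpNorm'_le_eLpNorm'_mul_rpow_measure_univ one_pos hq hG.aestronglyMeasurable
  simp only [eLpNorm', enorm_eq_self, ENNReal.rpow_one, div_one] at h
  calc (∫⁻ x, G x ∂μ) ^ q
      ≤ ((∫⁻ x, G x ^ q ∂μ) ^ (1 / q) * μ Set.univ ^ (1 - 1 / q)) ^ q := by gcongr
    _ = μ Set.univ ^ (q - 1) * ∫⁻ x, G x ^ q ∂μ := by
        rw [ENNReal.mul_rpow_of_nonneg _ _ hq₀.le, ← ENNReal.rpow_mul, ← ENNReal.rpow_mul,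
          one_div_mul_cancel hq₀.ne', ENNReal.rpow_one, sub_mul, one_div_mul_cancel hq₀.ne',
          one_mul, mul_comm]

lemma eLpNorm'_le_of_rpow_le_mul_lintegral {p r : ℝ} (hp : 0 < p) (hpr : p ≤ r)
    (hG : AEMeasurable G μ) {K : ℝ≥0∞} (h : ∀ x, G x ^ p ≤ K * ∫⁻ y, G y ^ p ∂μ) :
    eLpNorm' G r μ ≤ K ^ (1 / p - 1 / r) * eLpNorm' G p μ := by
  have hr : 0 < r := hp.trans_le hpr
  have hexp : 0 ≤ r / p - 1 := sub_nonneg.2 ((one_le_div hp).2 hpr)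
  simp only [eLpNorm', enorm_eq_self]
  set J := ∫⁻ y, G y ^ p ∂μ
  have hpow : ∫⁻ x, G x ^ r ∂μ ≤ K ^ (r / p - 1) * J ^ (r / p) :=
    calc ∫⁻ x, G x ^ r ∂μ = ∫⁻ x, (G x ^ p) ^ (r / p - 1) * G x ^ p ∂μ := by
          refine lintegral_congr fun x => ?_
          rw [← ENNReal.rpow_mul, ← ENNReal.rpow_add_of_nonneg _ _ (by positivity) hp.le]
          congr 1; field_simp; ring
      _ ≤ ∫⁻ x, (K * J) ^ (r / p - 1) * G x ^ p ∂μ := by gcongr with x; exact h x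
      _ = (K * J) ^ (r / p - 1) * J := lintegral_const_mul'' _ (hG.pow_const p)
      _ = K ^ (r / p - 1) * (J ^ (r / p - 1) * J ^ (1 : ℝ)) := by
          rw [ENNReal.mul_rpow_of_nonneg _ _ hexp, mul_assoc, ENNReal.rpow_one]
      _ = K ^ (r / p - 1) * J ^ (r / p) := by
          rw [← ENNReal.rpow_add_of_nonneg _ _ hexp zero_le_one, sub_add_cancel]
  calc (∫⁻ x, G x ^ r ∂μ) ^ (1 / r) ≤ (K ^ (r / p - 1) * J ^ (r / p)) ^ (1 / r) := by gcongr
    _ = K ^ (1 / p - 1 / r) * J ^ (1 / p) := by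
        rw [ENNReal.mul_rpow_of_nonneg _ _ (by positivity), ← ENNReal.rpow_mul, ← ENNReal.rpow_mul]
        congr 2 <;> field_simp

lemma lintegral_eq_mul_lintegral_comp_mul_left {R : ℝ≥0} (hR : R ≠ 0) (g : ℝ → ℝ≥0∞) :
    ∫⁻ t, g t = R * ∫⁻ t, g (R * t) := by
  have hR' : (R : ℝ) ≠ 0 := mod_cast hR
  have hmap : ∫⁻ t, g (R * t) = ∫⁻ t, g t ∂volume.map (R * · : ℝ → ℝ) :=
    (lintegral_map_equiv g (Homeomorph.mulLeft₀ (R : ℝ) hR').toMeasurableEquiv).symm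
  rw [hmap, ← smul_eq_mul, ← lintegral_smul_measure]
  conv_lhs => rw [← Real.smul_map_volume_mul_left hR']
  simp

end Lebesgue

section PeetreWeight

variable {V : Type*} [NormedAddCommGroup V]

/-- The weight `(1 + R ‖v‖)⁻¹` of Peetre's maximal function at frequency scale `R`. -/
noncomputable def peetreWeight (R : ℝ≥0) (v : V) : ℝ≥0∞ := (1 + R * ‖v‖ₑ)⁻¹

@[fun_prop]
lemma measurable_peetreWeight [MeasurableSpace V] [OpensMeasurableSpace V] (R : ℝ≥0) :
    Measurable (peetreWeight R : V → ℝ≥0∞) := by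
  unfold peetreWeight; fun_prop

lemma peetreWeight_le_one (R : ℝ≥0) (v : V) : peetreWeight R v ≤ 1 := by
  simp [peetreWeight]

lemma peetreWeight_pow_ne_top (R : ℝ≥0) (v : V) (N : ℕ) : peetreWeight R v ^ N ≠ ∞ :=
  ENNReal.pow_ne_top (ne_top_of_le_ne_top ENNReal.one_ne_top (peetreWeight_le_one R v))

lemma peetreWeight_pow_rpow_le {M N : ℕ} {q : ℝ} (h : N ≤ M * q) (R : ℝ≥0) (v : V) :
    (peetreWeight R v ^ M) ^ q ≤ peetreWeight R v ^ N := by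
  rw [← ENNReal.rpow_natCast, ← ENNReal.rpow_mul, ← ENNReal.rpow_natCast]
  exact ENNReal.rpow_le_rpow_of_exponent_ge (peetreWeight_le_one R v) h

lemma peetreWeight_mul_le (R : ℝ≥0) (u v : V) :
    peetreWeight R u * peetreWeight R v ≤ peetreWeight R (u + v) := by
  unfold peetreWeight
  rw [← ENNReal.mul_inv (by simp) (by simp), ENNReal.inv_le_inv]
  calc 1 + R * ‖u + v‖ₑ ≤ 1 + R * (‖u‖ₑ + ‖v‖ₑ) := by gcongr; exact enorm_add_le u v
    _ ≤ 1 + R * (‖u‖ₑ + ‖v‖ₑ) + R * ‖u‖ₑ * (R * ‖v‖ₑ) := le_self_add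
    _ = (1 + R * ‖u‖ₑ) * (1 + R * ‖v‖ₑ) := by ring

lemma peetreWeight_le_of_norm_le {W : Type*} [NormedAddCommGroup W] {v : V} {w : W}
    (h : ‖w‖ ≤ ‖v‖) (R : ℝ≥0) : peetreWeight R v ≤ peetreWeight R w := by
  unfold peetreWeight
  gcongr
  exact enorm_le_iff_norm_le.2 h

lemma peetreWeight_eq_ofReal (R : ℝ≥0) (v : V) :
    peetreWeight R v = ENNReal.ofReal (1 + R * ‖v‖)⁻¹ := by
  rw [peetreWeight, ENNReal.ofReal_inv_of_pos (by positivity),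
    ENNReal.ofReal_add zero_le_one (by positivity), ENNReal.ofReal_mul R.coe_nonneg, ofReal_norm]
  simp

lemma peetreWeight_one_mul (R : ℝ≥0) (t : ℝ) : peetreWeight 1 (R * t) = peetreWeight R t := by
  simp [peetreWeight, enorm_mul]

lemma lintegral_peetreWeight_one_sq_ne_top : ∫⁻ t : ℝ, peetreWeight 1 t ^ 2 ≠ ∞ := by
  have h := finite_integral_one_add_norm (E := ℝ) (μ := volume) (r := 2) (by simp)
  refine (h.trans_eq' (lintegral_congr fun t => ?_)).ne
  rw [peetreWeight_eq_ofReal, ← ENNReal.ofReal_pow (by positivity), Real.rpow_neg (by positivity)]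
  simp

lemma mul_lintegral_peetreWeight_sq_le (R : ℝ≥0) :
    R * ∫⁻ t : ℝ, peetreWeight R t ^ 2 ≤ ∫⁻ t : ℝ, peetreWeight 1 t ^ 2 := by
  rcases eq_or_ne R 0 with rfl | hR
  · simp
  · simp [lintegral_eq_mul_lintegral_comp_mul_left hR (fun t => peetreWeight 1 t ^ 2),
      peetreWeight_one_mul]

end PeetreWeight

section SelfAveraging

/-- `G : ℝ → ℝ≥0∞` is dominated, for every `N`, by its average at scale `1 / R` against the `N`-th
power of the Peetre weight, with constant `C N`. Measurability and boundedness are included so that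
the property is closed under positive powers. -/
structure SelfAveraging (C : ℕ → ℝ≥0) (R : ℝ≥0) (G : ℝ → ℝ≥0∞) : Prop where
  measurable : Measurable G
  bounded : ∃ B : ℝ≥0, ∀ x, G x ≤ B
  le_average : ∀ N x, G x ≤ C N * (R * ∫⁻ y, G y * peetreWeight R (x - y) ^ N)

namespace SelfAveraging

variable {C : ℕ → ℝ≥0} {R : ℝ≥0} {G : ℝ → ℝ≥0∞}

lemma le_mul_lintegral (hG : SelfAveraging C R G) (x : ℝ) : G x ≤ C 0 * R * ∫⁻ y, G y := by
  simpa [mul_assoc] using hG.le_average 0 x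

lemma iSup_mul_peetreWeight_ne_top (hG : SelfAveraging C R G) (M : ℕ) (x : ℝ) :
    ⨆ y, G y * peetreWeight R (x - y) ^ M ≠ ∞ := by
  obtain ⟨B, hB⟩ := hG.bounded
  refine ne_top_of_le_ne_top (ENNReal.coe_ne_top (r := B)) (iSup_le fun y => ?_)
  exact (mul_le_of_le_one_right' (pow_le_one' (peetreWeight_le_one _ _) _)).trans (hB y)

lemma mul_peetreWeight_le (hG : SelfAveraging C R G) (M : ℕ) (x z : ℝ) :
    G z * peetreWeight R (x - z) ^ M ≤
      C M * (R * ∫⁻ y, G y * peetreWeight R (x - y) ^ M) :=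
  calc G z * peetreWeight R (x - z) ^ M
      ≤ C M * (R * ∫⁻ y, G y * peetreWeight R (z - y) ^ M) * peetreWeight R (x - z) ^ M := by
        gcongr; exact hG.le_average M z
    _ = C M * (R * ∫⁻ y, G y * peetreWeight R (z - y) ^ M * peetreWeight R (x - z) ^ M) := by
        rw [lintegral_mul_const' _ _ (peetreWeight_pow_ne_top _ _ _)]; ring
    _ ≤ C M * (R * ∫⁻ y, G y * peetreWeight R (x - y) ^ M) := by
        gcongr _ * (_ * ∫⁻ y, ?_) with y
        rw [mul_assoc, ← mul_pow]
        gcongr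
        simpa [add_comm] using peetreWeight_mul_le R (z - y) (x - z)

-- Peetre's maximal function `S` is at most `S ^ (1 - q)` times the average of `G ^ q`; as `S`
-- is finite, `S ^ (1 - q)` can be divided out.
lemma rpow_le_average_of_le_one (hG : SelfAveraging C R G) {q : ℝ} (hq₀ : 0 < q) (hq₁ : q ≤ 1)
    {M N : ℕ} (hMN : N ≤ M * q) (x : ℝ) :
    G x ^ q ≤ C M * (R * ∫⁻ y, G y ^ q * peetreWeight R (x - y) ^ N) := by
  set S := ⨆ y, G y * peetreWeight R (x - y) ^ M
  have hS_top : S ≠ ∞ := hG.iSup_mul_peetreWeight_ne_top M x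
  have le_S (y : ℝ) : G y * peetreWeight R (x - y) ^ M ≤ S :=
    le_iSup (fun y => G y * peetreWeight R (x - y) ^ M) y
  have split (y : ℝ) : G y * peetreWeight R (x - y) ^ M ≤
      S ^ (1 - q) * (G y ^ q * peetreWeight R (x - y) ^ N) := by
    refine (le_rpow_one_sub_mul_rpow hq₀.le hq₁ (le_S y)).trans ?_
    rw [ENNReal.mul_rpow_of_nonneg _ _ hq₀.le]
    gcongr
    exact peetreWeight_pow_rpow_le hMN R (x - y)
  have hS_le : S ≤ C M * (R * ∫⁻ y, G y ^ q * peetreWeight R (x - y) ^ N) * S ^ (1 - q) :=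
    iSup_le fun z =>
      calc G z * peetreWeight R (x - z) ^ M
          ≤ C M * (R * ∫⁻ y, G y * peetreWeight R (x - y) ^ M) := hG.mul_peetreWeight_le M x z
        _ ≤ C M * (R * ∫⁻ y, S ^ (1 - q) * (G y ^ q * peetreWeight R (x - y) ^ N)) := by
            gcongr _ * (_ * ∫⁻ y, ?_) with y; exact split y
        _ = C M * (R * ∫⁻ y, G y ^ q * peetreWeight R (x - y) ^ N) * S ^ (1 - q) := by
            rw [lintegral_const_mul' _ _ (ENNReal.rpow_ne_top_of_nonneg (by linarith) hS_top)]
            ring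
  calc G x ^ q ≤ S ^ q := by gcongr; simpa [peetreWeight] using le_S x
    _ ≤ C M * (R * ∫⁻ y, G y ^ q * peetreWeight R (x - y) ^ N) :=
        rpow_le_of_le_mul_rpow_one_sub hq₀ hS_top hS_le

lemma rpow_le_average_of_one_le (hG : SelfAveraging C R G) {q : ℝ} (hq : 1 ≤ q) (N : ℕ) (x : ℝ) :
    G x ^ q ≤ C (N + 2) ^ q * (∫⁻ t : ℝ, peetreWeight 1 t ^ 2) ^ (q - 1) *
      (R * ∫⁻ y, G y ^ q * peetreWeight R (x - y) ^ N) := by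
  have hq₀ : 0 ≤ q := by linarith
  let ν : Measure ℝ := volume.withDensity fun y => R * peetreWeight R (x - y) ^ (N + 2)
  have lintegral_ν {H : ℝ → ℝ≥0∞} (hH : Measurable H) :
      ∫⁻ y, H y ∂ν = R * ∫⁻ y, H y * peetreWeight R (x - y) ^ (N + 2) := by
    rw [lintegral_withDensity_eq_lintegral_mul _ (by fun_prop) hH,
      ← lintegral_const_mul' _ _ ENNReal.coe_ne_top]
    exact lintegral_congr fun y => by simp only [Pi.mul_apply]; ring
  have weight_anti {m n : ℕ} (h : m ≤ n) (t : ℝ) : peetreWeight R t ^ n ≤ peetreWeight R t ^ m :=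
    pow_le_pow_right_of_le_one' (peetreWeight_le_one R t) h
  have ν_univ : ν Set.univ ≤ ∫⁻ t : ℝ, peetreWeight 1 t ^ 2 :=
    calc ν Set.univ = R * ∫⁻ y, peetreWeight R (x - y) ^ (N + 2) := by
          rw [← lintegral_one, lintegral_ν measurable_const]; simp
      _ = R * ∫⁻ t : ℝ, peetreWeight R t ^ (N + 2) := by
          rw [lintegral_sub_left_eq_self (fun t => peetreWeight R t ^ (N + 2))]
      _ ≤ R * ∫⁻ t : ℝ, peetreWeight R t ^ 2 := by
          gcongr _ * ∫⁻ t, ?_ with t; exact weight_anti (Nat.le_add_left 2 N) t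
      _ ≤ ∫⁻ t : ℝ, peetreWeight 1 t ^ 2 := mul_lintegral_peetreWeight_sq_le R
  calc G x ^ q ≤ (C (N + 2) * ∫⁻ y, G y ∂ν) ^ q := by
        rw [lintegral_ν hG.measurable]; gcongr; exact hG.le_average (N + 2) x
    _ = C (N + 2) ^ q * (∫⁻ y, G y ∂ν) ^ q := ENNReal.mul_rpow_of_nonneg _ _ hq₀
    _ ≤ C (N + 2) ^ q * (ν Set.univ ^ (q - 1) * ∫⁻ y, G y ^ q ∂ν) := by
        gcongr; exact lintegral_rpow_le_measure_univ_rpow_mul hq hG.measurable.aemeasurable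
    _ = C (N + 2) ^ q * ν Set.univ ^ (q - 1) *
          (R * ∫⁻ y, G y ^ q * peetreWeight R (x - y) ^ (N + 2)) := by
        rw [lintegral_ν (hG.measurable.pow_const q), mul_assoc]
    _ ≤ _ := by
        gcongr _ * ?_ ^ _ * (_ * ∫⁻ y, _ * ?_) with y
        exact weight_anti (Nat.le_add_right N 2) (x - y)

lemma exists_rpow (C : ℕ → ℝ≥0) {q : ℝ} (hq : 0 < q) :
    ∃ C' : ℕ → ℝ≥0, ∀ (R : ℝ≥0) (G : ℝ → ℝ≥0∞),
      SelfAveraging C R G → SelfAveraging C' R fun x => G x ^ q := by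
  suffices ∃ C' : ℕ → ℝ≥0, ∀ (R : ℝ≥0) (G : ℝ → ℝ≥0∞), SelfAveraging C R G →
      ∀ N x, G x ^ q ≤ C' N * (R * ∫⁻ y, G y ^ q * peetreWeight R (x - y) ^ N) by
    obtain ⟨C', hC'⟩ := this
    refine ⟨C', fun R G hG => ⟨hG.measurable.pow_const q, ?_, hC' R G hG⟩⟩
    obtain ⟨B, hB⟩ := hG.bounded
    refine ⟨B ^ q, fun x => ?_⟩
    rw [ENNReal.coe_rpow_of_nonneg _ hq.le]
    gcongr
    exact hB x
  rcases le_total q 1 with hq₁ | hq₁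
  · exact ⟨fun N => C ⌈N / q⌉₊, fun R G hG N =>
      hG.rpow_le_average_of_le_one hq hq₁ ((div_le_iff₀ hq).1 (Nat.le_ceil _))⟩
  · refine ⟨fun N => C (N + 2) ^ q * (∫⁻ t : ℝ, peetreWeight 1 t ^ 2).toNNReal ^ (q - 1),
      fun R G hG N x => ?_⟩
    rw [ENNReal.coe_mul, ENNReal.coe_rpow_of_nonneg _ hq.le,
      ENNReal.coe_rpow_of_nonneg _ (sub_nonneg.2 hq₁),
      ENNReal.coe_toNNReal lintegral_peetreWeight_one_sq_ne_top]
    exact hG.rpow_le_average_of_one_le hq₁ N x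

lemma lintegral {α : Type*} [MeasurableSpace α] {μ : Measure α} [SFinite μ] {F : α → ℝ → ℝ≥0∞}
    (hF : Measurable (Function.uncurry F)) (h : ∀ a, SelfAveraging C R (F a))
    (hbdd : ∃ B : ℝ≥0, ∀ x, ∫⁻ a, F a x ∂μ ≤ B) :
    SelfAveraging C R fun x => ∫⁻ a, F a x ∂μ where
  measurable := hF.lintegral_prod_left'
  bounded := hbdd
  le_average N x :=
    calc ∫⁻ a, F a x ∂μ
        ≤ ∫⁻ a, C N * (R * ∫⁻ y, F a y * peetreWeight R (x - y) ^ N) ∂μ :=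
          lintegral_mono fun a => (h a).le_average N x
      _ = C N * (R * ∫⁻ a, (∫⁻ y, F a y * peetreWeight R (x - y) ^ N) ∂μ) := by
          rw [lintegral_const_mul' _ _ ENNReal.coe_ne_top,
            lintegral_const_mul' _ _ ENNReal.coe_ne_top]
      _ = C N * (R * ∫⁻ y, ∫⁻ a, F a y * peetreWeight R (x - y) ^ N ∂μ) := by
          rw [lintegral_lintegral_swap]
          have : Measurable fun z : α × ℝ => F z.1 z.2 := hF
          fun_prop
      _ = C N * (R * ∫⁻ y, (∫⁻ a, F a y ∂μ) * peetreWeight R (x - y) ^ N) := by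
          simp_rw [lintegral_mul_const' _ _ (peetreWeight_pow_ne_top _ _ _)]

lemma exists_eLpNorm' (C : ℕ → ℝ≥0) {p : ℝ} (hp : 0 < p) :
    ∃ C' : ℕ → ℝ≥0, ∀ {α : Type*} [MeasurableSpace α] (μ : Measure α) [SFinite μ] (R : ℝ≥0)
      (F : α → ℝ → ℝ≥0∞), Measurable (Function.uncurry F) → (∀ a, SelfAveraging C R (F a)) →
      (∃ B : ℝ≥0, ∀ x, ∫⁻ a, F a x ^ p ∂μ ≤ B) →
      SelfAveraging C' R fun x => eLpNorm' (F · x) p μ := by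
  obtain ⟨C₁, hC₁⟩ := exists_rpow C hp
  obtain ⟨C₂, hC₂⟩ := exists_rpow C₁ (one_div_pos.2 hp)
  refine ⟨C₂, fun μ _ R F hF h hbdd => hC₂ R _ ?_⟩
  exact lintegral (hF.pow_const p) (fun a => hC₁ R _ (h a)) hbdd

lemma exists_eLpNorm'_le (C : ℕ → ℝ≥0) {p r : ℝ} (hp : 0 < p) (hpr : p ≤ r) :
    ∃ c : ℝ≥0, ∀ (R : ℝ≥0) (G : ℝ → ℝ≥0∞), SelfAveraging C R G →
      eLpNorm' G r volume ≤ c * (R : ℝ≥0∞) ^ (1 / p - 1 / r) * eLpNorm' G p volume := by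
  have hexp : 0 ≤ 1 / p - 1 / r := sub_nonneg.2 (one_div_le_one_div_of_le hp hpr)
  obtain ⟨C', hC'⟩ := exists_rpow C hp
  refine ⟨C' 0 ^ (1 / p - 1 / r), fun R G hG => ?_⟩
  rw [ENNReal.coe_rpow_of_nonneg _ hexp, ← ENNReal.mul_rpow_of_nonneg _ _ hexp]
  exact eLpNorm'_le_of_rpow_le_mul_lintegral hp hpr hG.measurable.aemeasurable
    (hC' R G hG).le_mul_lintegral

end SelfAveraging

end SelfAveraging

section BandLimited

variable {V E : Type*} [NormedAddCommGroup V] [NormedAddCommGroup E]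

lemma exists_enorm_le_mul_peetreWeight_pow [NormedSpace ℝ V] [NormedSpace ℝ E] (f : 𝓢(V, E)) :
    ∃ C : ℕ → ℝ≥0, ∀ N x, ‖f x‖ₑ ≤ C N * peetreWeight 1 x ^ N := by
  refine ⟨fun N => (2 ^ N * (Finset.Iic (N, 0)).sup
    (fun m => SchwartzMap.seminorm ℝ m.1 m.2) f).toNNReal, fun N x => ?_⟩
  have h := SchwartzMap.one_add_le_sup_seminorm_apply (𝕜 := ℝ) (m := (N, 0)) le_rfl le_rfl f x
  rw [norm_iteratedFDeriv_zero] at h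
  rw [← ofReal_norm, peetreWeight_eq_ofReal, ← ENNReal.ofReal_pow (by positivity),
    ← ENNReal.ofReal.eq_1, ← ENNReal.ofReal_mul (by positivity)]
  apply ENNReal.ofReal_le_ofReal
  rw [NNReal.coe_one, one_mul, inv_pow, ← div_eq_mul_inv, le_div_iff₀ (by positivity), mul_comm]
  exact h

lemma exists_lintegral_rpow_enorm_comp_le [NormedSpace ℝ V] [NormedSpace ℝ E] (f : 𝓢(V, E))
    {p : ℝ} (hp : 0 < p) :
    ∃ B : ℝ≥0, ∀ γ : ℝ → V, (∀ t, ‖t‖ ≤ ‖γ t‖) → ∫⁻ t, ‖f (γ t)‖ₑ ^ p ≤ B := by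
  obtain ⟨C, hC⟩ := exists_enorm_le_mul_peetreWeight_pow f
  set N := ⌈2 / p⌉₊
  have hN : (2 : ℕ) ≤ N * p := (div_le_iff₀ hp).1 (by exact_mod_cast Nat.le_ceil (2 / p))
  refine ⟨C N ^ p * (∫⁻ t : ℝ, peetreWeight 1 t ^ 2).toNNReal, fun γ hγ => ?_⟩
  rw [ENNReal.coe_mul, ENNReal.coe_toNNReal lintegral_peetreWeight_one_sq_ne_top,
    ← lintegral_const_mul' _ _ ENNReal.coe_ne_top, ENNReal.coe_rpow_of_nonneg _ hp.le]
  gcongr with t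
  calc ‖f (γ t)‖ₑ ^ p ≤ (C N * peetreWeight 1 t ^ N) ^ p := by
        gcongr
        exact (hC N _).trans (by gcongr; exact peetreWeight_le_of_norm_le (hγ t) 1)
    _ = C N ^ p * (peetreWeight 1 t ^ N) ^ p := ENNReal.mul_rpow_of_nonneg _ _ hp.le
    _ ≤ C N ^ p * peetreWeight 1 t ^ 2 := by gcongr; exact peetreWeight_pow_rpow_le hN 1 t

lemma exists_schwartzMap_fourier_eq_one :
    ∃ K : 𝓢(ℝ, ℂ), ∀ ξ : ℝ, |ξ| ≤ 1 → 𝓕 (K : ℝ → ℂ) ξ = 1 := by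
  let φ : ContDiffBump (0 : ℝ) := ⟨1, 2, one_pos, one_lt_two⟩
  have hsupp : HasCompactSupport fun x => (φ x : ℂ) :=
    φ.hasCompactSupport.comp_left Complex.ofReal_zero
  have hsmooth : ContDiff ℝ (⊤ : ℕ∞) fun x => (φ x : ℂ) :=
    Complex.ofRealCLM.contDiff.comp φ.contDiff
  refine ⟨𝓕⁻ (hsupp.toSchwartzMap hsmooth), fun ξ hξ => ?_⟩
  have hφ : φ ξ = 1 := φ.one_of_mem_closedBall (by simpa using hξ)
  rw [← SchwartzMap.fourier_coe, FourierTransform.fourier_fourierInv_eq]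
  simp [hφ]

variable [InnerProductSpace ℝ V] [FiniteDimensional ℝ V] [MeasurableSpace V] [BorelSpace V]
  [NormedSpace ℂ E] [CompleteSpace E]

lemma schwartzMap_eq_integral_fourierChar_smul (f : 𝓢(V, E)) (x : V) :
    f x = ∫ v, Real.fourierChar (inner ℝ v x) • 𝓕 (f : V → E) v := by
  conv_lhs => rw [← FourierTransform.fourierInv_fourier_eq (F := 𝓢(V, E)) f]
  rw [SchwartzMap.fourierInv_coe, Real.fourierInv_eq, SchwartzMap.fourier_coe]

-- Both sides are `∫ 𝓕 K ⟪v, e⟫ • 𝐞 ⟪v, x⟫ • 𝓕 f v`: self-adjointness of the Fourier transform for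
-- the pairing `(t, v) ↦ t ⟪e, v⟫` moves the transform from `K` to `f`.
lemma integral_smul_schwartzMap_sub_smul_eq (f : 𝓢(V, E)) (e : V) {K : ℝ → ℂ}
    (hK : Integrable K) (hKf : ∀ ξ, 𝓕 (f : V → E) ξ ≠ 0 → 𝓕 K (inner ℝ ξ e) = 1) (x : V) :
    ∫ t, K t • f (x - t • e) = f x := by
  let L : ℝ →ₗ[ℝ] V →ₗ[ℝ] ℝ := LinearMap.toSpanSingleton ℝ _ (innerₗ V e)
  have hL (t : ℝ) (v : V) : L t v = t * inner ℝ v e := by simp [L, real_inner_comm]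
  let g : V → E := fun v => Real.fourierChar (inner ℝ v x) • 𝓕 (f : V → E) v
  have hg : Integrable g := by
    have := (VectorFourier.fourierIntegral_convergent_iff Real.continuous_fourierChar
      (L := innerₗ V) continuous_inner (-x)).2 ((𝓕 f).integrable (μ := volume))
    simpa [g, SchwartzMap.fourier_coe] using this
  have translate (t : ℝ) :
      VectorFourier.fourierIntegral Real.fourierChar volume L.flip g t = f (x - t • e) := by
    rw [schwartzMap_eq_integral_fourierChar_smul f]
    refine integral_congr_ae (.of_forall fun v => ?_)
    simp only [g, LinearMap.flip_apply, hL, smul_smul, ← AddChar.map_add_eq_mul, inner_sub_right,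
      inner_smul_right, neg_add_eq_sub]
  have reproduce (v : V) :
      VectorFourier.fourierIntegral Real.fourierChar volume L K v • g v = g v := by
    by_cases hv : 𝓕 (f : V → E) v = 0
    · simp [g, hv]
    · rw [show VectorFourier.fourierIntegral Real.fourierChar volume L K v = 1 by
        rw [← hKf v hv, Real.fourier_real_eq]; simp only [VectorFourier.fourierIntegral, hL],
        one_smul]
  calc ∫ t, K t • f (x - t • e)
      = ∫ t, K t • VectorFourier.fourierIntegral Real.fourierChar volume L.flip g t := by
        simp_rw [translate]
    _ = ∫ v, VectorFourier.fourierIntegral Real.fourierChar volume L K v • g v :=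
        (VectorFourier.integral_fourierIntegral_smul_eq_flip Real.continuous_fourierChar
          (by simp_rw [hL]; fun_prop) hK hg).symm
    _ = f x := by simp_rw [reproduce, g, ← schwartzMap_eq_integral_fourierChar_smul]

lemma enorm_le_mul_lintegral_of_fourier_support {K : 𝓢(ℝ, ℂ)}
    (hK : ∀ ξ : ℝ, |ξ| ≤ 1 → 𝓕 (K : ℝ → ℂ) ξ = 1) {R : ℝ≥0} (hR : R ≠ 0) (f : 𝓢(V, E)) (e : V)
    (hf : ∀ ξ, 𝓕 (f : V → E) ξ ≠ 0 → |inner ℝ ξ e| ≤ R) (x : V) :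
    ‖f x‖ₑ ≤ R * ∫⁻ s, ‖K (R * s)‖ₑ * ‖f (x - s • e)‖ₑ := by
  have hR' : (R : ℝ) ≠ 0 := mod_cast hR
  have hKf (ξ : V) (hξ : 𝓕 (f : V → E) ξ ≠ 0) : 𝓕 (K : ℝ → ℂ) (inner ℝ ξ ((R : ℝ)⁻¹ • e)) = 1 := by
    refine hK _ ?_
    rw [inner_smul_right, abs_mul, abs_inv, NNReal.abs_eq]
    exact inv_mul_le_one_of_le₀ (hf ξ hξ) R.coe_nonneg
  calc ‖f x‖ₑ = ‖∫ t, K t • f (x - t • (R : ℝ)⁻¹ • e)‖ₑ := by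
        rw [integral_smul_schwartzMap_sub_smul_eq f _ K.integrable hKf]
    _ ≤ ∫⁻ t, ‖K t‖ₑ * ‖f (x - t • (R : ℝ)⁻¹ • e)‖ₑ := by
        simpa only [enorm_smul] using enorm_integral_le_lintegral_enorm
          fun t => K t • f (x - t • (R : ℝ)⁻¹ • e)
    _ = R * ∫⁻ s, ‖K (R * s)‖ₑ * ‖f (x - s • e)‖ₑ := by
        rw [lintegral_eq_mul_lintegral_comp_mul_left hR]
        congr! 6 with s
        rw [smul_smul, mul_right_comm, mul_inv_cancel₀ hR', one_mul]

variable (V E) in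
lemma exists_selfAveraging_of_fourier_support :
    ∃ C : ℕ → ℝ≥0, ∀ (R : ℝ≥0), R ≠ 0 → ∀ (f : 𝓢(V, E)) (e : V),
      (∀ ξ, 𝓕 (f : V → E) ξ ≠ 0 → |inner ℝ ξ e| ≤ R) →
      ∀ x, SelfAveraging C R fun t => ‖f (x + t • e)‖ₑ := by
  obtain ⟨K, hK⟩ := exists_schwartzMap_fourier_eq_one
  obtain ⟨C, hC⟩ := exists_enorm_le_mul_peetreWeight_pow K
  refine ⟨C, fun R hR f e hf x => ⟨?measurable, ?bounded, fun N z => ?le_average⟩⟩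
  case measurable =>
    exact (f.continuous.comp (by fun_prop : Continuous fun t : ℝ => x + t • e)).enorm.measurable
  case bounded =>
    obtain ⟨B, hB⟩ := exists_enorm_le_mul_peetreWeight_pow f
    exact ⟨B 0, fun t => by simpa using hB 0 (x + t • e)⟩
  case le_average =>
    have kernel_le (y : ℝ) : ‖K (R * (z - y))‖ₑ ≤ C N * peetreWeight R (z - y) ^ N := by
      simpa only [peetreWeight_one_mul] using hC N (R * (z - y))
    calc ‖f (x + z • e)‖ₑ ≤ R * ∫⁻ s, ‖K (R * s)‖ₑ * ‖f (x + z • e - s • e)‖ₑ :=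
          enorm_le_mul_lintegral_of_fourier_support hK hR f e hf _
      _ = R * ∫⁻ y, ‖K (R * (z - y))‖ₑ * ‖f (x + y • e)‖ₑ := by
          rw [← lintegral_sub_left_eq_self _ z]
          simp only [add_sub_assoc, ← sub_smul, sub_sub_cancel]
      _ ≤ R * ∫⁻ y, C N * (‖f (x + y • e)‖ₑ * peetreWeight R (z - y) ^ N) := by
          gcongr _ * ∫⁻ y, ?_ with y
          rw [mul_left_comm, mul_comm]
          gcongr
          exact kernel_le y
      _ = C N * (R * ∫⁻ y, ‖f (x + y • e)‖ₑ * peetreWeight R (z - y) ^ N) := by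
          rw [lintegral_const_mul' _ _ ENNReal.coe_ne_top, mul_left_comm]

end BandLimited

section MixedNorm

/-- The mixed `L_{(p₁, p₂)}` quasi-norm of a function of two real variables, integrated in the
first variable first. -/
noncomputable def mixedLpNorm {E : Type*} [ENorm E] (p₁ p₂ : ℝ) (F : ℝ → ℝ → E) : ℝ≥0∞ :=
  eLpNorm' (fun x₂ => eLpNorm' (F · x₂) p₁ volume) p₂ volume

lemma mixedLpNorm_eq_lintegral {E : Type*} [ENorm E] (p₁ p₂ : ℝ) (F : ℝ → ℝ → E) :
    mixedLpNorm p₁ p₂ F =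
      (∫⁻ x₂ : ℝ, (∫⁻ x₁ : ℝ, ‖F x₁ x₂‖ₑ ^ p₁) ^ (p₂ / p₁)) ^ (1 / p₂) := by
  simp only [mixedLpNorm, eLpNorm', enorm_eq_self, ← ENNReal.rpow_mul, one_div_mul_eq_div]

lemma exists_mixedLpNorm_le_of_selfAveraging (C : ℕ → ℝ≥0) {p₁ p₂ r₁ r₂ : ℝ}
    (hp₁ : 0 < p₁) (hp₂ : 0 < p₂) (h₁ : p₁ ≤ r₁) (h₂ : p₂ ≤ r₂) :
    ∃ c : ℝ≥0, ∀ (R₁ R₂ : ℝ≥0) (F : ℝ → ℝ → ℝ≥0∞), Measurable (Function.uncurry F) →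
      (∀ x₂, SelfAveraging C R₁ (F · x₂)) → (∀ x₁, SelfAveraging C R₂ (F x₁)) →
      (∃ B : ℝ≥0, ∀ x₂, ∫⁻ x₁, F x₁ x₂ ^ p₁ ≤ B) →
      mixedLpNorm r₁ r₂ F ≤ c * (R₁ : ℝ≥0∞) ^ (1 / p₁ - 1 / r₁) *
        (R₂ : ℝ≥0∞) ^ (1 / p₂ - 1 / r₂) * mixedLpNorm p₁ p₂ F := by
  obtain ⟨C', hC'⟩ := SelfAveraging.exists_eLpNorm' C hp₁
  obtain ⟨c₁, hc₁⟩ := SelfAveraging.exists_eLpNorm'_le C hp₁ h₁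
  obtain ⟨c₂, hc₂⟩ := SelfAveraging.exists_eLpNorm'_le C' hp₂ h₂
  refine ⟨c₁ * c₂, fun R₁ R₂ F hF hF₁ hF₂ hbdd => ?_⟩
  have hnorm : SelfAveraging C' R₂ fun x₂ => eLpNorm' (F · x₂) p₁ volume :=
    hC' volume R₂ F hF hF₂ hbdd
  calc mixedLpNorm r₁ r₂ F
      ≤ c₁ * (R₁ : ℝ≥0∞) ^ (1 / p₁ - 1 / r₁) * mixedLpNorm p₁ r₂ F :=
        eLpNorm'_le_mul_eLpNorm'_of_ae_le_mul hnorm.measurable.aestronglyMeasurable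
          (.of_forall fun x₂ => hc₁ R₁ _ (hF₁ x₂)) (hp₂.trans_le h₂)
    _ ≤ c₁ * (R₁ : ℝ≥0∞) ^ (1 / p₁ - 1 / r₁) *
          (c₂ * (R₂ : ℝ≥0∞) ^ (1 / p₂ - 1 / r₂) * mixedLpNorm p₁ p₂ F) := by
        gcongr; exact hc₂ R₂ _ hnorm
    _ = _ := by push_cast; ring

end MixedNorm

section Plane

lemma pt_add_smul_pt_one_zero (x₁ x₂ t : ℝ) : pt x₁ x₂ + t • pt 1 0 = pt (x₁ + t) x₂ := by
  ext i; fin_cases i <;> simp [pt]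

lemma pt_add_smul_pt_zero_one (x₁ x₂ t : ℝ) : pt x₁ x₂ + t • pt 0 1 = pt x₁ (x₂ + t) := by
  ext i; fin_cases i <;> simp [pt]

lemma inner_pt_one_zero (ξ : EuclideanSpace ℝ (Fin 2)) : inner ℝ ξ (pt 1 0) = ξ 0 := by
  simp [pt, PiLp.inner_apply]

lemma inner_pt_zero_one (ξ : EuclideanSpace ℝ (Fin 2)) : inner ℝ ξ (pt 0 1) = ξ 1 := by
  simp [pt, PiLp.inner_apply]

lemma norm_le_norm_pt (x₁ x₂ : ℝ) : ‖x₁‖ ≤ ‖pt x₁ x₂‖ := by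
  simpa [pt] using PiLp.norm_apply_le (pt x₁ x₂) 0

lemma continuous_pt : Continuous fun z : ℝ × ℝ => pt z.1 z.2 := by
  unfold pt; fun_prop

end Plane

theorem stmt6_general {E : Type*} [NormedAddCommGroup E] [NormedSpace ℂ E] [CompleteSpace E]
    (p₁ p₂ r₁ r₂ : ℝ) (hp₁ : 0 < p₁) (hp₂ : 0 < p₂) (h₁ : p₁ ≤ r₁) (h₂ : p₂ ≤ r₂) :
    ∃ c : ℝ≥0∞, 0 < c ∧ c ≠ ∞ ∧ ∀ (R₁ R₂ : ℝ), 0 < R₁ → 0 < R₂ →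
      ∀ f : 𝓢(EuclideanSpace ℝ (Fin 2), E),
        Function.support (𝓕 (f : EuclideanSpace ℝ (Fin 2) → E))
          ⊆ {ξ : EuclideanSpace ℝ (Fin 2) | |ξ 0| ≤ R₁ ∧ |ξ 1| ≤ R₂} →
        (∫⁻ x₂ : ℝ, (∫⁻ x₁ : ℝ, (‖f (pt x₁ x₂)‖₊ : ℝ≥0∞) ^ r₁) ^ (r₂ / r₁)) ^ (1 / r₂)
          ≤ c * ENNReal.ofReal (R₁ ^ (1 / p₁ - 1 / r₁)) * ENNReal.ofReal (R₂ ^ (1 / p₂ - 1 / r₂))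
              * (∫⁻ x₂ : ℝ, (∫⁻ x₁ : ℝ, (‖f (pt x₁ x₂)‖₊ : ℝ≥0∞) ^ p₁) ^ (p₂ / p₁)) ^ (1 / p₂) := by
  obtain ⟨C, hC⟩ := exists_selfAveraging_of_fourier_support (EuclideanSpace ℝ (Fin 2)) E
  obtain ⟨c, hc⟩ := exists_mixedLpNorm_le_of_selfAveraging C hp₁ hp₂ h₁ h₂
  refine ⟨c + 1, by simp, by simp, fun R₁ R₂ hR₁ hR₂ f hf => ?_⟩
  lift R₁ to ℝ≥0 using hR₁.le
  lift R₂ to ℝ≥0 using hR₂.le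
  have hmeas : Measurable (Function.uncurry fun x₁ x₂ => ‖f (pt x₁ x₂)‖ₑ) :=
    (f.continuous.comp continuous_pt).enorm.measurable
  have avg₁ (x₂ : ℝ) : SelfAveraging C R₁ fun x₁ => ‖f (pt x₁ x₂)‖ₑ := by
    simpa [pt_add_smul_pt_one_zero] using hC R₁ (by simpa using hR₁.ne') f (pt 1 0)
      (fun ξ hξ => (inner_pt_one_zero ξ).symm ▸ (hf hξ).1) (pt 0 x₂)
  have avg₂ (x₁ : ℝ) : SelfAveraging C R₂ fun x₂ => ‖f (pt x₁ x₂)‖ₑ := by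
    simpa [pt_add_smul_pt_zero_one] using hC R₂ (by simpa using hR₂.ne') f (pt 0 1)
      (fun ξ hξ => (inner_pt_zero_one ξ).symm ▸ (hf hξ).2) (pt x₁ 0)
  have bdd : ∃ B : ℝ≥0, ∀ x₂, ∫⁻ x₁, ‖f (pt x₁ x₂)‖ₑ ^ p₁ ≤ B :=
    (exists_lintegral_rpow_enorm_comp_le f hp₁).imp fun B hB x₂ =>
      hB (pt · x₂) (norm_le_norm_pt · x₂)
  have key := hc R₁ R₂ _ hmeas avg₁ avg₂ bdd
  simp only [mixedLpNorm_eq_lintegral, enorm_eq_self] at key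
  rw [← ENNReal.ofReal_rpow_of_pos hR₁, ← ENNReal.ofReal_rpow_of_pos hR₂,
    ENNReal.ofReal_coe_nnreal, ENNReal.ofReal_coe_nnreal]
  exact key.trans (by gcongr ?_ * _ * _ * _; exact le_self_add)

/-- Mixed-norm Nikol'skij–Plancherel–Polya inequality in two variables: for
`0 < pₖ ≤ rₖ < ∞` there is `c > 0` such that every Schwartz function on `ℝ²` whose Fourier
transform is supported in the rectangle `[-R₁,R₁] × [-R₂,R₂]` satisfies
`‖f‖_{(r₁,r₂)} ≤ c R₁^{1/p₁-1/r₁} R₂^{1/p₂-1/r₂} ‖f‖_{(p₁,p₂)}`. -/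
theorem stmt6 (p₁ p₂ r₁ r₂ : ℝ) (hp₁ : 0 < p₁) (hp₂ : 0 < p₂)
    (h₁ : p₁ ≤ r₁) (h₂ : p₂ ≤ r₂) :
    ∃ c : ℝ≥0∞, 0 < c ∧ c ≠ ∞ ∧ ∀ (R₁ R₂ : ℝ), 0 < R₁ → 0 < R₂ →
      ∀ f : 𝓢(EuclideanSpace ℝ (Fin 2), ℂ),
        Function.support (𝓕 (f : EuclideanSpace ℝ (Fin 2) → ℂ))
          ⊆ {ξ : EuclideanSpace ℝ (Fin 2) | |ξ 0| ≤ R₁ ∧ |ξ 1| ≤ R₂} →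
        (∫⁻ x₂ : ℝ, (∫⁻ x₁ : ℝ, (‖f (pt x₁ x₂)‖₊ : ℝ≥0∞) ^ r₁) ^ (r₂ / r₁)) ^ (1 / r₂)
          ≤ c * ENNReal.ofReal (R₁ ^ (1 / p₁ - 1 / r₁)) * ENNReal.ofReal (R₂ ^ (1 / p₂ - 1 / r₂))
              * (∫⁻ x₂ : ℝ, (∫⁻ x₁ : ℝ, (‖f (pt x₁ x₂)‖₊ : ℝ≥0∞) ^ p₁) ^ (p₂ / p₁)) ^ (1 / p₂) := by
  exact stmt6_general p₁ p₂ r₁ r₂ hp₁ hp₂ h₁ h₂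
end

section
/- (Sequence Nikol'skij–Plancherel–Polya inequality under a geometric rectangle condition, unmixed norms.) Let n ≥ 1, let 0 < p < r < ∞, let 0 < q < ∞, let A > 0, and let R₁, …, R_n > 1. Then there exists a constant c > 0 such that for every sequence (f_j)_{j∈ℕ} of Schwartz functions on ℝⁿ satisfying supp 𝓕f_j ⊆ [−A R₁^j, A R₁^j] × ⋯ × [−A R_n^j, A R_n^j] for all j, one has ‖(∑_{j=0}^∞ |f_j(·)|^q)^{1/q}‖_r ≤ c · ‖sup_{j∈ℕ} (∏_{k=1}^n R_k^{j(1/p − 1/r)}) |f_j(·)|‖_p, where both sides may be infinite. -/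
open scoped ENNReal NNReal FourierTransform SchwartzMap
open MeasureTheory

/-!
Write `B = ∏ k, R k`, `g = sup_j B ^ (j * (1 / p - 1 / r)) * |f_j|` and `G = ‖g‖_p`. By definition
of `g`, `|f_j| ≤ B ^ (-j * (1 / p - 1 / r)) * g` pointwise. A function with bounded spectrum is
reproduced by convolution with a fixed Schwartz kernel, which bounds its supremum by its `L^p`
quasi-norm; rescaling this linearly gives `|f_j| ≤ C * B ^ (j / p) * ‖f_j‖_p ≤ C * B ^ (j / r) * G`.
The first bound decreases and the second increases geometrically in `j`, so `∑_j |f_j| ^ q` is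
comparable to its size at the crossing point of the two, which yields
`(∑_j |f_j| ^ q) ^ (r / q) ≲ G ^ (r - p) * g ^ p`. Integrating this estimate gives the inequality.
-/

section GeometricSums

variable {b : ℝ≥0∞}

lemma exists_rpow_eq {t : ℝ≥0∞} (hb : 1 < b) (hb_top : b ≠ ∞) (ht₀ : t ≠ 0) (ht_top : t ≠ ∞) :
    ∃ u : ℝ, b ^ u = t := by
  lift b to ℝ≥0 using hb_top
  lift t to ℝ≥0 using ht_top
  have hb' : 1 < b := mod_cast hb
  have ht : 0 < t := pos_iff_ne_zero.2 (mod_cast ht₀)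
  refine ⟨Real.logb b t, ?_⟩
  rw [← ENNReal.coe_rpow_of_ne_zero (zero_lt_one.trans hb').ne']
  exact congrArg _ (NNReal.eq (Real.rpow_logb (by positivity) (mod_cast hb'.ne') ht))

lemma tsum_int_pow_natAbs_ne_top {ρ : ℝ≥0∞} (hρ : ρ < 1) : ∑' i : ℤ, ρ ^ i.natAbs ≠ ∞ := by
  lift ρ to ℝ≥0 using (hρ.trans ENNReal.one_lt_top).ne
  have hgeom : Summable fun i : ℕ ↦ (ρ : ℝ) ^ i :=
    summable_geometric_of_lt_one ρ.2 (mod_cast hρ)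
  have hsum : Summable fun i : ℤ ↦ (ρ : ℝ) ^ i.natAbs :=
    .of_nat_of_neg (by simpa using hgeom) (by simpa using hgeom)
  simp only [← ENNReal.coe_pow]
  exact ENNReal.tsum_coe_ne_top_iff_summable.2 (mod_cast hsum)

lemma abs_intCast_sub_floor_le (i : ℤ) (u : ℝ) : |(i : ℝ) - ⌊u⌋| ≤ |i - u| + 1 := by
  have hfract : |u - ⌊u⌋| ≤ 1 := by
    rw [Int.self_sub_floor, Int.abs_fract]
    exact (Int.fract_lt_one u).le
  linarith [abs_sub_le (i : ℝ) u ⌊u⌋]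

lemma exists_forall_tsum_rpow_neg_mul_abs_sub_le (hb : 1 < b) (hb_top : b ≠ ∞) {δ : ℝ}
    (hδ : 0 < δ) :
    ∃ K : ℝ≥0∞, K ≠ ∞ ∧ ∀ u : ℝ, ∑' i : ℤ, b ^ (-(δ * |(i : ℝ) - u|)) ≤ K := by
  have hb₀ : b ≠ 0 := (zero_lt_one.trans hb).ne'
  have hρ : b ^ (-δ) < 1 := ENNReal.rpow_lt_one_of_one_lt_of_neg hb (neg_lt_zero.2 hδ)
  refine ⟨b ^ δ * ∑' i : ℤ, (b ^ (-δ)) ^ i.natAbs, ENNReal.mul_ne_top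
    (ENNReal.rpow_ne_top_of_nonneg hδ.le hb_top) (tsum_int_pow_natAbs_ne_top hρ), fun u ↦ ?_⟩
  calc ∑' i : ℤ, b ^ (-(δ * |(i : ℝ) - u|))
      ≤ ∑' i : ℤ, b ^ δ * (b ^ (-δ)) ^ (i - ⌊u⌋).natAbs := by
        refine ENNReal.tsum_le_tsum fun i ↦ ?_
        rw [← ENNReal.rpow_mul_natCast, ← ENNReal.rpow_add _ _ hb₀ hb_top, Nat.cast_natAbs]
        push_cast
        refine ENNReal.rpow_le_rpow_of_exponent_le hb.le ?_
        nlinarith [abs_intCast_sub_floor_le i u]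
    _ = b ^ δ * ∑' i : ℤ, (b ^ (-δ)) ^ i.natAbs := by
        rw [ENNReal.tsum_mul_left]
        exact congrArg _ ((Equiv.subRight ⌊u⌋).tsum_eq fun i : ℤ ↦ (b ^ (-δ)) ^ i.natAbs)

lemma le_mul_rpow_neg_mul_abs (hb : 1 ≤ b) {a T : ℝ≥0∞} {s t δ v : ℝ} (hδs : δ ≤ s)
    (hδt : δ ≤ t) (has : a ≤ T * b ^ (s * v)) (hat : a ≤ T * b ^ (-(t * v))) :
    a ≤ T * b ^ (-(δ * |v|)) := by
  rcases le_total v 0 with hv | hv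
  · refine has.trans (mul_le_mul_right (ENNReal.rpow_le_rpow_of_exponent_le hb ?_) T)
    rw [abs_of_nonpos hv]
    nlinarith
  · refine hat.trans (mul_le_mul_right (ENNReal.rpow_le_rpow_of_exponent_le hb ?_) T)
    rw [abs_of_nonneg hv]
    nlinarith

lemma exists_forall_tsum_rpow_le_of_two_sided (hb : 1 < b) (hb_top : b ≠ ∞) {s t q : ℝ}
    (hs : 0 < s) (ht : 0 < t) (hq : 0 < q) :
    ∃ K : ℝ≥0∞, K ≠ ∞ ∧ ∀ (T : ℝ≥0∞) (u : ℝ) (a : ℕ → ℝ≥0∞),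
      (∀ j : ℕ, a j ≤ T * b ^ (s * (j - u))) → (∀ j : ℕ, a j ≤ T * b ^ (-(t * (j - u)))) →
      ∑' j, a j ^ q ≤ K * T ^ q := by
  have hδ : 0 < min s t := lt_min hs ht
  obtain ⟨K, hK, hsum⟩ := exists_forall_tsum_rpow_neg_mul_abs_sub_le hb hb_top (mul_pos hδ hq)
  refine ⟨K, hK, fun T u a has hat ↦ ?_⟩
  have hterm (j : ℕ) : a j ^ q ≤ T ^ q * b ^ (-(min s t * q * |((j : ℤ) : ℝ) - u|)) := by
    have hle := le_mul_rpow_neg_mul_abs hb.le (min_le_left s t) (min_le_right s t) (has j) (hat j)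
    refine (ENNReal.rpow_le_rpow hle hq.le).trans_eq ?_
    rw [ENNReal.mul_rpow_of_nonneg _ _ hq.le, ← ENNReal.rpow_mul, Int.cast_natCast]
    ring_nf
  calc ∑' j, a j ^ q
      ≤ ∑' j : ℕ, T ^ q * b ^ (-(min s t * q * |((j : ℤ) : ℝ) - u|)) := ENNReal.tsum_le_tsum hterm
    _ = T ^ q * ∑' j : ℕ, b ^ (-(min s t * q * |((j : ℤ) : ℝ) - u|)) := ENNReal.tsum_mul_left
    _ ≤ T ^ q * K := by
        gcongr
        exact (ENNReal.tsum_comp_le_tsum_of_injective Nat.cast_injective _).trans (hsum u)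
    _ = K * T ^ q := mul_comm _ _

/- The two bounds on `a j` cross at `j = p * v`, where they equal `T = H * b ^ (p * v / r)`, and
decay geometrically away from the crossing. -/
lemma exists_forall_tsum_rpow_rpow_le_mul_rpow (hb : 1 < b) (hb_top : b ≠ ∞) {p r q : ℝ}
    (hp : 0 < p) (hpr : p < r) (hq : 0 < q) :
    ∃ K : ℝ≥0∞, K ≠ ∞ ∧ ∀ (H : ℝ≥0∞) (v : ℝ) (a : ℕ → ℝ≥0∞),
      (∀ j : ℕ, a j ≤ H * b ^ ((j : ℝ) / r)) →
      (∀ j : ℕ, b ^ ((j : ℝ) * (1 / p - 1 / r)) * a j ≤ H * b ^ v) →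
      (∑' j, a j ^ q) ^ (r / q) ≤ K * H ^ (r - p) * (H * b ^ v) ^ p := by
  have hb₀ : b ≠ 0 := (zero_lt_one.trans hb).ne'
  have hr : 0 < r := hp.trans hpr
  have hσ : 0 < 1 / p - 1 / r := sub_pos.2 (one_div_lt_one_div_of_lt hp hpr)
  obtain ⟨K, hK, hsum⟩ :=
    exists_forall_tsum_rpow_le_of_two_sided hb hb_top (one_div_pos.2 hr) hσ hq
  refine ⟨K ^ (r / q), ENNReal.rpow_ne_top_of_nonneg (by positivity) hK,
    fun H v a hincr hdecr ↦ ?_⟩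
  set T := H * b ^ (p * v / r)
  have hTincr (j : ℕ) : a j ≤ T * b ^ (1 / r * (j - p * v)) := by
    refine (hincr j).trans_eq ?_
    rw [mul_assoc, ← ENNReal.rpow_add _ _ hb₀ hb_top]
    ring_nf
  have hTdecr (j : ℕ) : a j ≤ T * b ^ (-((1 / p - 1 / r) * (j - p * v))) := by
    refine ((ENNReal.mul_le_iff_le_inv (by simp [ENNReal.rpow_eq_zero_iff, hb₀, hb_top])
      (ENNReal.rpow_ne_top_of_ne_zero hb₀ hb_top)).1 (hdecr j)).trans_eq ?_
    rw [← ENNReal.rpow_neg, mul_left_comm, mul_assoc, ← ENNReal.rpow_add _ _ hb₀ hb_top,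
      ← ENNReal.rpow_add _ _ hb₀ hb_top]
    congr 2
    field_simp
    ring
  calc (∑' j, a j ^ q) ^ (r / q)
      ≤ (K * T ^ q) ^ (r / q) := by
        gcongr
        exact hsum T (p * v) a hTincr hTdecr
    _ = K ^ (r / q) * T ^ r := by
        rw [ENNReal.mul_rpow_of_nonneg _ _ (by positivity), ← ENNReal.rpow_mul,
          mul_div_cancel₀ _ hq.ne']
    _ = K ^ (r / q) * H ^ (r - p) * (H * b ^ v) ^ p := by
        rw [ENNReal.mul_rpow_of_nonneg _ _ hr.le, ENNReal.mul_rpow_of_nonneg _ _ hp.le, mul_assoc,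
          ← mul_assoc (H ^ _), ← ENNReal.rpow_add_of_nonneg _ _ (sub_nonneg.2 hpr.le) hp.le,
          ← ENNReal.rpow_mul, ← ENNReal.rpow_mul, div_mul_cancel₀ _ hr.ne', sub_add_cancel,
          mul_comm p v]

lemma exists_forall_tsum_rpow_rpow_le (hb : 1 < b) (hb_top : b ≠ ∞) {p r q : ℝ} (hp : 0 < p)
    (hpr : p < r) (hq : 0 < q) :
    ∃ K : ℝ≥0∞, K ≠ 0 ∧ K ≠ ∞ ∧ ∀ (H g : ℝ≥0∞) (a : ℕ → ℝ≥0∞),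
      (∀ j : ℕ, a j ≤ H * b ^ ((j : ℝ) / r)) →
      (∀ j : ℕ, b ^ ((j : ℝ) * (1 / p - 1 / r)) * a j ≤ g) →
      (∑' j, a j ^ q) ^ (r / q) ≤ K * H ^ (r - p) * g ^ p := by
  have hb₀ : b ≠ 0 := (zero_lt_one.trans hb).ne'
  have hr : 0 < r := hp.trans hpr
  obtain ⟨K, hK, hsum⟩ := exists_forall_tsum_rpow_rpow_le_mul_rpow hb hb_top hp hpr hq
  refine ⟨K + 1, by simp, by simp [hK], fun H g a hincr hdecr ↦ ?_⟩
  by_cases hzero : H = 0 ∨ g = 0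
  · have ha (j : ℕ) : a j = 0 := by
      rcases hzero with rfl | rfl
      · simpa using hincr j
      · simpa [ENNReal.rpow_eq_zero_iff, hb₀, hb_top] using hdecr j
    simp [ha, hq, hr]
  obtain ⟨hH₀, hg₀⟩ := not_or.1 hzero
  by_cases htop : H = ∞ ∨ g = ∞
  · suffices (K + 1) * H ^ (r - p) * g ^ p = ∞ from this ▸ le_top
    rcases htop with rfl | rfl <;>
      simp [ENNReal.rpow_eq_zero_iff, hp.le, hpr.le, *]
  obtain ⟨hH_top, hg_top⟩ := not_or.1 htop
  obtain ⟨v, hv⟩ := exists_rpow_eq hb hb_top (ENNReal.div_ne_zero.2 ⟨hg₀, hH_top⟩)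
    (ENNReal.div_ne_top hg_top hH₀)
  obtain rfl : g = H * b ^ v := by rw [hv, ENNReal.mul_div_cancel hH₀ hH_top]
  exact (hsum H v a hincr hdecr).trans (by gcongr; exact le_self_add)

end GeometricSums

section SequenceInequality

variable {α : Type*} [MeasurableSpace α] (μ : Measure α)

lemma lintegral_const_mul_rpow_rpow_one_div {w : ℝ≥0∞} (hw : w ≠ ∞) {p : ℝ} (hp : 0 < p)
    (u : α → ℝ≥0∞) :
    (∫⁻ x, (w * u x) ^ p ∂μ) ^ (1 / p) = w * (∫⁻ x, u x ^ p ∂μ) ^ (1 / p) := by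
  simp only [ENNReal.mul_rpow_of_nonneg _ _ hp.le]
  rw [lintegral_const_mul' _ _ (ENNReal.rpow_ne_top_of_nonneg hp.le hw),
    ENNReal.mul_rpow_of_nonneg _ _ (by positivity), ← ENNReal.rpow_mul,
    mul_one_div_cancel hp.ne', ENNReal.rpow_one]

lemma mul_rpow_mul_lintegral_rpow_le {b : ℝ≥0∞} (hb₀ : b ≠ 0) (hb_top : b ≠ ∞) {p : ℝ}
    (hp : 0 < p) (r : ℝ) (a : ℕ → α → ℝ≥0∞) (C : ℝ≥0∞) (j : ℕ) :
    C * (b ^ (j : ℝ) * ∫⁻ y, a j y ^ p ∂μ) ^ (1 / p) ≤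
      C * (∫⁻ y, (⨆ i : ℕ, b ^ ((i : ℝ) * (1 / p - 1 / r)) * a i y) ^ p ∂μ) ^ (1 / p) *
        b ^ ((j : ℝ) / r) := by
  have hsplit : (b ^ (j : ℝ)) ^ (1 / p) = b ^ ((j : ℝ) / r) * b ^ ((j : ℝ) * (1 / p - 1 / r)) := by
    rw [← ENNReal.rpow_mul, ← ENNReal.rpow_add _ _ hb₀ hb_top]
    ring_nf
  rw [ENNReal.mul_rpow_of_nonneg _ _ (by positivity), hsplit, mul_assoc (b ^ _),
    ← lintegral_const_mul_rpow_rpow_one_div μ (ENNReal.rpow_ne_top_of_ne_zero hb₀ hb_top) hp,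
    mul_comm (b ^ _), ← mul_assoc]
  gcongr with y
  exact le_iSup (fun i : ℕ ↦ b ^ ((i : ℝ) * (1 / p - 1 / r)) * a i y) j

lemma rpow_lintegral_le_of_le_mul_rpow_mul_rpow {p r : ℝ} (hp : 0 < p) (hpr : p ≤ r) {M : ℝ≥0∞}
    (hM₀ : M ≠ 0) (hM_top : M ≠ ∞) {u g : α → ℝ≥0∞}
    (hu : ∀ x, u x ≤ M * ((∫⁻ y, g y ^ p ∂μ) ^ (1 / p)) ^ (r - p) * g x ^ p) :
    (∫⁻ x, u x ∂μ) ^ (1 / r) ≤ M ^ (1 / r) * (∫⁻ x, g x ^ p ∂μ) ^ (1 / p) := by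
  have hr : 0 < r := hp.trans_le hpr
  have hrp : 0 ≤ r - p := sub_nonneg.2 hpr
  set G := (∫⁻ x, g x ^ p ∂μ) ^ (1 / p) with hG
  rcases eq_or_ne G ∞ with hG_top | hG_top
  · rw [hG_top, ENNReal.mul_top (ENNReal.rpow_pos (pos_iff_ne_zero.2 hM₀) hM_top).ne']
    exact le_top
  have hGp : ∫⁻ x, g x ^ p ∂μ = G ^ p := by
    rw [hG, ← ENNReal.rpow_mul, one_div_mul_cancel hp.ne', ENNReal.rpow_one]
  calc (∫⁻ x, u x ∂μ) ^ (1 / r)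
      ≤ (∫⁻ x, M * G ^ (r - p) * g x ^ p ∂μ) ^ (1 / r) := by
        gcongr with x
        exact hu x
    _ = (M * G ^ (r - p) * G ^ p) ^ (1 / r) := by
        rw [lintegral_const_mul' _ _ (ENNReal.mul_ne_top hM_top
          (ENNReal.rpow_ne_top_of_nonneg hrp hG_top)), hGp]
    _ = M ^ (1 / r) * G := by
        rw [mul_assoc, ← ENNReal.rpow_add_of_nonneg _ _ hrp hp.le, sub_add_cancel,
          ENNReal.mul_rpow_of_nonneg _ _ (by positivity), ← ENNReal.rpow_mul,
          mul_one_div_cancel hr.ne', ENNReal.rpow_one]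

theorem exists_forall_lintegral_tsum_le_of_nikolskii {b : ℝ≥0∞} (hb : 1 < b) (hb_top : b ≠ ∞)
    {p r q : ℝ} (hp : 0 < p) (hpr : p < r) (hq : 0 < q) {C : ℝ≥0∞} (hC : C ≠ ∞) :
    ∃ c : ℝ≥0∞, 0 < c ∧ c ≠ ∞ ∧ ∀ a : ℕ → α → ℝ≥0∞,
      (∀ j x, a j x ≤ C * (b ^ (j : ℝ) * ∫⁻ y, a j y ^ p ∂μ) ^ (1 / p)) →
      (∫⁻ x, (∑' j, a j x ^ q) ^ (r / q) ∂μ) ^ (1 / r) ≤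
        c * (∫⁻ x, (⨆ j : ℕ, b ^ ((j : ℝ) * (1 / p - 1 / r)) * a j x) ^ p ∂μ) ^ (1 / p) := by
  have hb₀ : b ≠ 0 := (zero_lt_one.trans hb).ne'
  have hr : 0 < r := hp.trans hpr
  have hrp : 0 ≤ r - p := sub_nonneg.2 hpr.le
  obtain ⟨K, hK₀, hK, hsum⟩ := exists_forall_tsum_rpow_rpow_le hb hb_top hp hpr hq
  set M := K * (C + 1) ^ (r - p)
  have hM₀ : M ≠ 0 := mul_ne_zero hK₀ (by simp [ENNReal.rpow_eq_zero_iff, hC])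
  have hM_top : M ≠ ∞ :=
    ENNReal.mul_ne_top hK (ENNReal.rpow_ne_top_of_nonneg hrp (by simp [hC]))
  refine ⟨M ^ (1 / r), ENNReal.rpow_pos (pos_iff_ne_zero.2 hM₀) hM_top,
    ENNReal.rpow_ne_top_of_nonneg (by positivity) hM_top, fun a ha ↦ ?_⟩
  refine rpow_lintegral_le_of_le_mul_rpow_mul_rpow μ hp hpr.le hM₀ hM_top fun x ↦ ?_
  rw [mul_assoc K, ← ENNReal.mul_rpow_of_nonneg _ _ hrp]
  refine hsum _ _ (a · x) (fun j ↦ ?_)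
    fun j ↦ le_iSup (fun j : ℕ ↦ b ^ ((j : ℝ) * (1 / p - 1 / r)) * a j x) j
  refine ((ha j x).trans (mul_rpow_mul_lintegral_rpow_le μ hb₀ hb_top hp r a C j)).trans ?_
  gcongr
  exact le_self_add

end SequenceInequality

section ReproducingKernels

/- Writing `u = u ^ (1 - p) * u ^ p` under the integral, the first factor is absorbed into the
supremum of `u` on the left, which is legitimate because that supremum is finite. -/
lemma le_rpow_lintegral_rpow_of_le_lintegral_kernel {α : Type*} [MeasurableSpace α] {μ : Measure α}
    {u : α → ℝ≥0∞} {k : α → α → ℝ≥0∞} {p : ℝ} (hp : 0 < p) (hp₁ : p ≤ 1) {κ : ℝ≥0∞} (hκ : κ ≠ ∞)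
    (hk : ∀ x y, k x y ≤ κ) (hu_top : ⨆ x, u x ≠ ∞)
    (hu : ∀ x, u x ≤ ∫⁻ y, k x y * u y ∂μ) (x : α) :
    u x ≤ κ ^ (1 / p) * (∫⁻ y, u y ^ p ∂μ) ^ (1 / p) := by
  set M := ⨆ x, u x
  have hp' : 0 ≤ 1 - p := sub_nonneg.2 hp₁
  have hM_top : M ^ (1 - p) ≠ ∞ := ENNReal.rpow_ne_top_of_nonneg hp' hu_top
  have hsplit (t : ℝ≥0∞) : t ^ (1 - p) * t ^ p = t := by
    rw [← ENNReal.rpow_add_of_nonneg _ _ hp' hp.le, sub_add_cancel, ENNReal.rpow_one]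
  have hM : M ^ (1 - p) * M ^ p ≤ M ^ (1 - p) * (κ * ∫⁻ y, u y ^ p ∂μ) := by
    rw [hsplit, ← mul_assoc, ← lintegral_const_mul' _ _ (ENNReal.mul_ne_top hM_top hκ)]
    refine iSup_le fun x ↦ (hu x).trans (lintegral_mono fun y ↦ ?_)
    calc k x y * u y = u y ^ (1 - p) * k x y * u y ^ p := by
          rw [mul_right_comm, hsplit, mul_comm]
      _ ≤ M ^ (1 - p) * κ * u y ^ p := by
          gcongr
          · exact le_iSup u y
          · exact hk x y
  have hMp : M ^ p ≤ κ * ∫⁻ y, u y ^ p ∂μ := by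
    rcases eq_or_ne M 0 with hM₀ | hM₀
    · simp [hM₀, hp]
    · exact (ENNReal.mul_le_mul_iff_right (by simp [ENNReal.rpow_eq_zero_iff, hM₀, hu_top])
        hM_top).1 hM
  rw [← ENNReal.mul_rpow_of_nonneg _ _ (by positivity), one_div]
  exact (le_iSup u x).trans ((ENNReal.le_rpow_inv_iff hp).2 hMp)

lemma lintegral_sub_mul_le_Lp_mul_Lq {G : Type*} [MeasurableSpace G] [AddGroup G] [MeasurableAdd G]
    [MeasurableNeg G] (μ : Measure G) [μ.IsAddLeftInvariant] [μ.IsNegInvariant] {p q : ℝ}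
    (hpq : p.HolderConjugate q) {k u : G → ℝ≥0∞} (hk : Measurable k) (hu : AEMeasurable u μ)
    (x : G) :
    ∫⁻ y, k (x - y) * u y ∂μ ≤ (∫⁻ y, k y ^ p ∂μ) ^ (1 / p) * (∫⁻ y, u y ^ q ∂μ) ^ (1 / q) := by
  rw [← lintegral_sub_left_eq_self (fun y ↦ k y ^ p) x]
  exact ENNReal.lintegral_mul_le_Lp_mul_Lq μ hpq
    (hk.comp (by fun_prop : Measurable (x - ·))).aemeasurable hu

end ReproducingKernels

section SchwartzIntegrals

variable {E F : Type*} [NormedAddCommGroup E] [NormedSpace ℝ E] [NormedAddCommGroup F]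
  [NormedSpace ℝ F]

lemma iSup_enorm_schwartzMap_ne_top (f : 𝓢(E, F)) : ⨆ x, ‖f x‖ₑ ≠ ∞ := by
  refine ne_top_of_le_ne_top (ENNReal.ofReal_ne_top (r := SchwartzMap.seminorm ℝ 0 0 f))
    (iSup_le fun x ↦ ?_)
  rw [← ofReal_norm]
  exact ENNReal.ofReal_le_ofReal (SchwartzMap.norm_le_seminorm ℝ f x)

variable [MeasurableSpace E] [BorelSpace E]

lemma lintegral_enorm_schwartzMap_rpow_ne_top (μ : Measure E) [μ.HasTemperateGrowth]
    (ψ : 𝓢(E, F)) {s : ℝ} (hs : 0 < s) : ∫⁻ y, ‖ψ y‖ₑ ^ s ∂μ ≠ ∞ := by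
  have hmem := ψ.eLpNorm_lt_top (.ofReal s) μ
  rw [eLpNorm_lt_top_iff_lintegral_rpow_enorm_lt_top (by simpa using hs) ENNReal.ofReal_ne_top,
    ENNReal.toReal_ofReal hs.le] at hmem
  exact hmem.ne

end SchwartzIntegrals

section LinearChangeOfVariables

variable {E F : Type*} [NormedAddCommGroup E] [InnerProductSpace ℝ E] [FiniteDimensional ℝ E]
  [NormedAddCommGroup F]

lemma det_adjoint (T : E →L[ℝ] E) : (ContinuousLinearMap.adjoint T).det = T.det := by
  let v := stdOrthonormalBasis ℝ E
  calc (ContinuousLinearMap.adjoint T).det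
      = (LinearMap.toMatrix v.toBasis v.toBasis (LinearMap.adjoint (T : E →ₗ[ℝ] E))).det :=
        (LinearMap.det_toMatrix v.toBasis _).symm
    _ = (LinearMap.toMatrix v.toBasis v.toBasis (T : E →ₗ[ℝ] E)).det := by
        rw [LinearMap.toMatrix_adjoint, Matrix.det_conjTranspose, star_trivial]
    _ = T.det := LinearMap.det_toMatrix v.toBasis _

variable [MeasurableSpace E] [BorelSpace E] (μ : Measure E) [μ.IsAddHaarMeasure]

lemma lintegral_comp_symm (T : E ≃L[ℝ] E) (g : E → ℝ≥0∞) :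
    ∫⁻ x, g (T.symm x) ∂μ = ENNReal.ofReal |(T : E →L[ℝ] E).det| * ∫⁻ x, g x ∂μ := by
  have := lintegral_image_eq_lintegral_abs_det_fderiv_mul μ MeasurableSet.univ
    (fun x _ ↦ T.hasFDerivAt.hasFDerivWithinAt) T.injective.injOn (g ∘ T.symm)
  simpa [Set.image_univ, T.surjective.range_eq,
    lintegral_const_mul' _ _ ENNReal.ofReal_ne_top] using this

lemma integral_comp_symm [NormedSpace ℝ F] (T : E ≃L[ℝ] E) (g : E → F) :
    ∫ x, g (T.symm x) ∂μ = |(T : E →L[ℝ] E).det| • ∫ x, g x ∂μ := by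
  have := integral_image_eq_integral_abs_det_fderiv_smul μ MeasurableSet.univ
    (fun x _ ↦ T.hasFDerivAt.hasFDerivWithinAt) T.injective.injOn (g ∘ T.symm)
  simpa [Set.image_univ, T.surjective.range_eq, integral_smul] using this

lemma fourier_comp_symm [NormedSpace ℂ F] (T : E ≃L[ℝ] E) (f : E → F) (ξ : E) :
    𝓕 (f ∘ T.symm) ξ =
      |(T : E →L[ℝ] E).det| • 𝓕 f (ContinuousLinearMap.adjoint (T : E →L[ℝ] E) ξ) := by
  rw [Real.fourier_eq, Real.fourier_eq, ← integral_comp_symm]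
  simp [ContinuousLinearMap.adjoint_inner_right]

end LinearChangeOfVariables

section Nikolskii

variable {E F : Type*} [NormedAddCommGroup E] [InnerProductSpace ℝ E] [FiniteDimensional ℝ E]
  [NormedAddCommGroup F]

lemma exists_schwartzMap_eqOn_one_s7 {K : Set E} (hK : Bornology.IsBounded K) :
    ∃ φ : 𝓢(E, ℂ), Set.EqOn φ 1 K := by
  obtain ⟨ρ, hρ, hKρ⟩ := hK.subset_closedBall_lt 0 0
  let bump : ContDiffBump (0 : E) := ⟨ρ, ρ + 1, hρ, lt_add_one ρ⟩
  have hsupp : HasCompactSupport (Complex.ofRealCLM ∘ bump) := bump.hasCompactSupport.comp_left rfl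
  refine ⟨hsupp.toSchwartzMap (Complex.ofRealCLM.contDiff.comp bump.contDiff), fun ξ hξ ↦ ?_⟩
  simp [bump.one_of_mem_closedBall (hKρ hξ)]

variable [NormedSpace ℂ F] [CompleteSpace F] [MeasurableSpace E] [BorelSpace E]

lemma convolution_fourierInv_eq_self {φ : 𝓢(E, ℂ)} {h : 𝓢(E, F)}
    (hφ : Set.EqOn φ 1 (Function.support (𝓕 (h : E → F)))) :
    SchwartzMap.convolution (ContinuousLinearMap.lsmul ℂ ℂ) (𝓕⁻ φ) h = h := by
  have hfourier : 𝓕 (SchwartzMap.convolution (ContinuousLinearMap.lsmul ℂ ℂ) (𝓕⁻ φ) h) = 𝓕 h := by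
    ext ξ
    rcases eq_or_ne (𝓕 h ξ) 0 with hξ | hξ
    · simp [SchwartzMap.fourier_convolution, hξ]
    · simp [SchwartzMap.fourier_convolution, hφ hξ]
  simpa using congrArg 𝓕⁻ hfourier

lemma exists_forall_enorm_le_lintegral_kernel {K : Set E} (hK : Bornology.IsBounded K) :
    ∃ ψ : 𝓢(E, ℂ), ∀ h : 𝓢(E, F), Function.support (𝓕 (h : E → F)) ⊆ K →
      ∀ x, ‖h x‖ₑ ≤ ∫⁻ y, ‖ψ (x - y)‖ₑ * ‖h y‖ₑ := by
  obtain ⟨φ, hφ⟩ := exists_schwartzMap_eqOn_one_s7 hK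
  refine ⟨𝓕⁻ φ, fun h hh x ↦ ?_⟩
  set ψ : 𝓢(E, ℂ) := 𝓕⁻ φ
  calc ‖h x‖ₑ = ‖∫ y, ψ (x - y) • h y‖ₑ := by
        conv_lhs => rw [← convolution_fourierInv_eq_self (hφ.mono hh),
          SchwartzMap.convolution_apply, convolution_eq_swap]
        rfl
    _ ≤ ∫⁻ y, ‖ψ (x - y) • h y‖ₑ := enorm_integral_le_lintegral_enorm _
    _ = ∫⁻ y, ‖ψ (x - y)‖ₑ * ‖h y‖ₑ := by simp only [enorm_smul]

theorem exists_forall_enorm_le_of_support_fourier_subset {K : Set E} (hK : Bornology.IsBounded K)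
    {p : ℝ} (hp : 0 < p) :
    ∃ C : ℝ≥0∞, C ≠ ∞ ∧ ∀ h : 𝓢(E, F), Function.support (𝓕 (h : E → F)) ⊆ K →
      ∀ x, ‖h x‖ₑ ≤ C * (∫⁻ y, ‖h y‖ₑ ^ p) ^ (1 / p) := by
  obtain ⟨ψ, hψ⟩ := exists_forall_enorm_le_lintegral_kernel (F := F) hK
  rcases le_or_gt p 1 with hp₁ | hp₁
  · have hψ_top := iSup_enorm_schwartzMap_ne_top ψ
    exact ⟨_, ENNReal.rpow_ne_top_of_nonneg (by positivity) hψ_top, fun h hh ↦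
      le_rpow_lintegral_rpow_of_le_lintegral_kernel hp hp₁ hψ_top
        (fun x y ↦ le_iSup (‖ψ ·‖ₑ) (x - y)) (iSup_enorm_schwartzMap_ne_top h) (hψ h hh)⟩
  · have hpq := (Real.HolderConjugate.conjExponent hp₁).symm
    have hψ_top := lintegral_enorm_schwartzMap_rpow_ne_top volume ψ hpq.pos
    exact ⟨_, ENNReal.rpow_ne_top_of_nonneg hpq.one_div_nonneg hψ_top, fun h hh x ↦
      (hψ h hh x).trans (lintegral_sub_mul_le_Lp_mul_Lq volume hpq ψ.continuous.enorm.measurable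
        h.continuous.enorm.aemeasurable x)⟩

theorem exists_forall_enorm_le_of_support_fourier_subset_image {K : Set E}
    (hK : Bornology.IsBounded K) {p : ℝ} (hp : 0 < p) :
    ∃ C : ℝ≥0∞, C ≠ ∞ ∧ ∀ L : E →L[ℝ] E, L.det ≠ 0 → ∀ f : 𝓢(E, F),
      Function.support (𝓕 (f : E → F)) ⊆ L '' K →
      ∀ x, ‖f x‖ₑ ≤ C * (ENNReal.ofReal |L.det| * ∫⁻ y, ‖f y‖ₑ ^ p) ^ (1 / p) := by
  obtain ⟨C, hC, hCK⟩ := exists_forall_enorm_le_of_support_fourier_subset (F := F) hK hp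
  refine ⟨C, hC, fun L hL f hf x ↦ ?_⟩
  let T := (ContinuousLinearMap.adjoint L).toContinuousLinearEquivOfDetNeZero
    (by rwa [det_adjoint])
  have hT : (T : E →L[ℝ] E) = ContinuousLinearMap.adjoint L :=
    ContinuousLinearMap.coe_toContinuousLinearEquivOfDetNeZero _ _
  let h : 𝓢(E, F) := SchwartzMap.compCLMOfContinuousLinearEquiv ℝ T.symm f
  have hh : Function.support (𝓕 (h : E → F)) ⊆ K := by
    intro ξ hξ
    change 𝓕 (f ∘ T.symm) ξ ≠ 0 at hξ
    rw [fourier_comp_symm, hT, ContinuousLinearMap.adjoint_adjoint] at hξ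
    obtain ⟨η, hη, hLη⟩ := hf (right_ne_zero_of_smul hξ)
    rwa [← (L.toContinuousLinearEquivOfDetNeZero hL).injective hLη]
  have hle := hCK h hh (T x)
  simp only [h, SchwartzMap.compCLMOfContinuousLinearEquiv_apply, Function.comp_apply,
    ContinuousLinearEquiv.symm_apply_apply] at hle
  rwa [lintegral_comp_symm volume T (fun y ↦ ‖f y‖ₑ ^ p), hT, det_adjoint] at hle

theorem exists_forall_lintegral_tsum_le_of_support_fourier_subset_image {K : Set E}
    (hK : Bornology.IsBounded K) {B : ℝ} (hB : 1 < B) {L : ℕ → E →L[ℝ] E}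
    (hL : ∀ j, |(L j).det| = B ^ j) {p r q : ℝ} (hp : 0 < p) (hpr : p < r) (hq : 0 < q) :
    ∃ c : ℝ≥0∞, 0 < c ∧ c ≠ ∞ ∧ ∀ f : ℕ → 𝓢(E, F),
      (∀ j, Function.support (𝓕 (f j : E → F)) ⊆ L j '' K) →
      (∫⁻ x, (∑' j, ‖f j x‖ₑ ^ q) ^ (r / q)) ^ (1 / r) ≤
        c * (∫⁻ x, (⨆ j : ℕ, ENNReal.ofReal B ^ ((j : ℝ) * (1 / p - 1 / r)) * ‖f j x‖ₑ) ^ p) ^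
          (1 / p) := by
  have hB₀ : 0 < B := zero_lt_one.trans hB
  obtain ⟨C, hC, hCK⟩ := exists_forall_enorm_le_of_support_fourier_subset_image (F := F) hK hp
  obtain ⟨c, hc₀, hc, hineq⟩ := exists_forall_lintegral_tsum_le_of_nikolskii (volume : Measure E)
    (ENNReal.one_lt_ofReal.2 hB) ENNReal.ofReal_ne_top hp hpr hq hC
  refine ⟨c, hc₀, hc, fun f hf ↦ hineq (fun j x ↦ ‖f j x‖ₑ) fun j x ↦ ?_⟩
  have hdet : (L j).det ≠ 0 := abs_pos.1 (hL j ▸ pow_pos hB₀ j)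
  simpa only [hL, ENNReal.ofReal_pow hB₀.le, ENNReal.rpow_natCast] using
    hCK (L j) hdet (f j) (hf j) x

end Nikolskii

section Rectangles

variable {ι : Type*}

lemma isBounded_setOf_forall_abs_apply_le [Finite ι] (A : ℝ) :
    Bornology.IsBounded {ξ : EuclideanSpace ℝ ι | ∀ k, |ξ k| ≤ A} := by
  cases nonempty_fintype ι
  refine ((PiLp.antilipschitzWith_ofLp 2 fun _ : ι ↦ ℝ).isBounded_preimage
    (Metric.isBounded_Icc (fun _ ↦ -A) fun _ ↦ A)).subset fun ξ hξ ↦ ?_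
  exact ⟨fun k ↦ (abs_le.1 (hξ k)).1, fun k ↦ (abs_le.1 (hξ k)).2⟩

variable [Fintype ι] [DecidableEq ι]

lemma det_toEuclideanCLM_diagonal (d : ι → ℝ) :
    (Matrix.toEuclideanCLM (𝕜 := ℝ) (Matrix.diagonal d)).det = ∏ k, d k := by
  rw [ContinuousLinearMap.det, Matrix.coe_toEuclideanCLM_eq_toEuclideanLin,
    LinearMap.det_toLpLin, Matrix.det_diagonal]

lemma setOf_forall_abs_apply_le_mul_subset_image {d : ι → ℝ} (hd : ∀ k, 0 < d k) (A : ℝ) :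
    {ξ : EuclideanSpace ℝ ι | ∀ k, |ξ k| ≤ A * d k} ⊆
      Matrix.toEuclideanCLM (𝕜 := ℝ) (Matrix.diagonal d) '' {η | ∀ k, |η k| ≤ A} := by
  intro ξ hξ
  refine ⟨WithLp.toLp 2 fun k ↦ ξ k / d k, fun k ↦ ?_, ?_⟩
  · simpa [abs_div, abs_of_pos (hd k), div_le_iff₀ (hd k)] using hξ k
  · ext k
    simp [Matrix.mulVec_diagonal, mul_div_cancel₀ _ (hd k).ne']

end Rectangles

lemma prod_ofReal_rpow {ι : Type*} (s : Finset ι) {R : ι → ℝ} (hR : ∀ k ∈ s, 0 < R k) (t : ℝ) :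
    ∏ k ∈ s, ENNReal.ofReal (R k ^ t) = ENNReal.ofReal (∏ k ∈ s, R k) ^ t := by
  rw [ENNReal.ofReal_rpow_of_pos (Finset.prod_pos hR),
    ← Real.finsetProd_rpow _ _ fun k hk ↦ (hR k hk).le,
    ENNReal.ofReal_prod_of_nonneg fun k hk ↦ Real.rpow_nonneg (hR k hk).le t]

theorem stmt7_general {ι F : Type*} [Fintype ι] [NormedAddCommGroup F] [NormedSpace ℂ F]
    [CompleteSpace F] {p r q : ℝ} (hp : 0 < p) (hpr : p < r) (hq : 0 < q) (A : ℝ) {R : ι → ℝ}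
    (hR : ∀ k, 0 < R k) (hR_prod : 1 < ∏ k, R k) :
    ∃ c : ℝ≥0∞, 0 < c ∧ c ≠ ∞ ∧ ∀ f : ℕ → 𝓢(EuclideanSpace ℝ ι, F),
      (∀ j : ℕ, Function.support (𝓕 (f j : EuclideanSpace ℝ ι → F)) ⊆
        {ξ | ∀ k, |ξ k| ≤ A * R k ^ (j : ℝ)}) →
      (∫⁻ x, (∑' j, ‖f j x‖ₑ ^ q) ^ (r / q)) ^ (1 / r) ≤
        c * (∫⁻ x, (⨆ j : ℕ, (∏ k, ENNReal.ofReal (R k ^ ((j : ℝ) * (1 / p - 1 / r)))) *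
          ‖f j x‖ₑ) ^ p) ^ (1 / p) := by
  classical
  let L (j : ℕ) := Matrix.toEuclideanCLM (𝕜 := ℝ) (Matrix.diagonal fun k ↦ R k ^ (j : ℝ))
  have hL (j : ℕ) : |(L j).det| = (∏ k, R k) ^ j := by
    simp only [L, det_toEuclideanCLM_diagonal, Real.rpow_natCast, Finset.prod_pow]
    exact abs_of_pos (pow_pos (zero_lt_one.trans hR_prod) j)
  obtain ⟨c, hc₀, hc, hineq⟩ := exists_forall_lintegral_tsum_le_of_support_fourier_subset_image
    (F := F) (isBounded_setOf_forall_abs_apply_le A) hR_prod hL hp hpr hq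
  refine ⟨c, hc₀, hc, fun f hf ↦ ?_⟩
  simp only [prod_ofReal_rpow _ fun k _ ↦ hR k]
  exact hineq f fun j ↦ (hf j).trans
    (setOf_forall_abs_apply_le_mul_subset_image (fun k ↦ Real.rpow_pos_of_pos (hR k) j) A)

/-- Sequence Nikol'skij–Plancherel–Polya inequality under a geometric rectangle condition,
with unmixed norms: for `0 < p < r < ∞`, `0 < q < ∞`, `A > 0` and `R₁, …, Rₙ > 1`, one has
`‖(∑_j |f_j|^q)^{1/q}‖_r ≤ c ‖sup_j (∏_k R_k^{j(1/p - 1/r)}) |f_j|‖_p` for every sequence of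
Schwartz functions with `supp 𝓕f_j ⊆ ∏_k [-A R_k^j, A R_k^j]`. -/
theorem stmt7 (n : ℕ) (hn : 1 ≤ n) (p r q : ℝ) (hp : 0 < p) (hpr : p < r)
    (hq : 0 < q) (A : ℝ) (hA : 0 < A) (R : Fin n → ℝ) (hR : ∀ k, 1 < R k) :
    ∃ c : ℝ≥0∞, 0 < c ∧ c ≠ ∞ ∧
      ∀ f : ℕ → 𝓢(EuclideanSpace ℝ (Fin n), ℂ),
        (∀ j : ℕ, Function.support (𝓕 (f j : EuclideanSpace ℝ (Fin n) → ℂ))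
          ⊆ {ξ : EuclideanSpace ℝ (Fin n) | ∀ k : Fin n, |ξ k| ≤ A * R k ^ (j:ℝ)}) →
        (∫⁻ x : EuclideanSpace ℝ (Fin n),
            (∑' j : ℕ, (‖f j x‖₊ : ℝ≥0∞) ^ q) ^ (r / q)) ^ (1 / r)
          ≤ c * (∫⁻ x : EuclideanSpace ℝ (Fin n),
              (⨆ j : ℕ, (∏ k : Fin n, ENNReal.ofReal (R k ^ ((j:ℝ) * (1 / p - 1 / r))))
                * (‖f j x‖₊ : ℝ≥0∞)) ^ p) ^ (1 / p) := by
  have : NeZero n := ⟨Nat.one_le_iff_ne_zero.1 hn⟩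
  exact stmt7_general hp hpr hq A (fun k ↦ zero_lt_one.trans (hR k)) <| by
    simpa using Finset.prod_lt_prod_of_nonempty (fun _ _ ↦ one_pos) (fun k _ ↦ hR k)
      (Finset.univ_nonempty (α := Fin n))
end
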